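/- arXiv:1404.2873 — 2 statements merged into one kernel-verified Lean document; each statement's English description precedes it below -/
import Mathlib

section
/- Let G be a finite abelian group with |G| > 2. Then max Δ*(G) = max { exp(G) − 2, r(G) − 1 }. -/
open Multiset

section Defs

variable {G : Type*} [AddCommGroup G]

/-- `S` is a zero-sum sequence over `G₀`: a multiset with entries in `G₀` and sum `0`. -/
def IsZeroSumSeq (G₀ : Set G) (S : Multiset G) : Prop :=
  (∀ x ∈ S, x ∈ G₀) ∧ S.sum = 0

/-- `S` is an atom over `G₀`: a nonempty zero-sum sequence over `G₀` that is not the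
union of two nonempty zero-sum sequences over `G₀`. -/
def IsAtomSeq (G₀ : Set G) (S : Multiset G) : Prop :=
  IsZeroSumSeq G₀ S ∧ S ≠ 0 ∧
    ∀ A B : Multiset G, IsZeroSumSeq G₀ A → IsZeroSumSeq G₀ B →
      A ≠ 0 → B ≠ 0 → S ≠ A + B

/-- The set of lengths of `B`: all `k` such that `B` is a union of `k` atoms over `G₀`. -/
def LengthSet (G₀ : Set G) (B : Multiset G) : Set ℕ :=
  {k | ∃ l : Multiset (Multiset G), Multiset.card l = k ∧
      (∀ A ∈ l, IsAtomSeq G₀ A) ∧ l.sum = B}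

/-- The set of successive distances of a set of naturals. -/
def DeltaOf (L : Set ℕ) : Set ℕ :=
  {d | ∃ x ∈ L, ∃ y ∈ L, x < y ∧ y - x = d ∧ ∀ z ∈ L, ¬(x < z ∧ z < y)}

/-- The set of distances `Δ(G₀)`. -/
def DeltaSet (G₀ : Set G) : Set ℕ :=
  {d | ∃ B : Multiset G, IsZeroSumSeq G₀ B ∧ B ≠ 0 ∧ d ∈ DeltaOf (LengthSet G₀ B)}

/-- `G₀` is half-factorial if `Δ(G₀) = ∅`. -/
def IsHalfFactorialSet (G₀ : Set G) : Prop := DeltaSet G₀ = ∅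

/-- `G₀` is minimal non-half-factorial if `Δ(G₀) ≠ ∅` and every proper subset is
half-factorial. -/
def IsMinNonHalfFactorial (G₀ : Set G) : Prop :=
  (DeltaSet G₀).Nonempty ∧ ∀ G₁ : Set G, G₁ ⊂ G₀ → DeltaSet G₁ = ∅

/-- The cross number `k(S) = Σ 1/ord(g)` of a multiset over `G`. -/
noncomputable def crossNumber (S : Multiset G) : ℚ :=
  (S.map (fun g => ((addOrderOf g : ℚ))⁻¹)).sum

/-- `G₀` is an LCN-set if every atom over `G₀` has cross number at least 1. -/
def IsLCNSet (G₀ : Set G) : Prop :=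
  ∀ U : Multiset G, IsAtomSeq G₀ U → 1 ≤ crossNumber U

/-- A subset of `G \ {0}` is independent if any integral linear relation on its elements
has all summands zero. -/
def IsIndependentSet (E : Set G) : Prop :=
  (0 : G) ∉ E ∧ ∀ s : Finset G, ↑s ⊆ E → ∀ f : G → ℤ,
    (∑ e ∈ s, f e • e) = 0 → ∀ e ∈ s, f e • e = 0

/-- `d` is a greatest common divisor of the set `S` of naturals. -/
def IsSetGcd (S : Set ℕ) (d : ℕ) : Prop :=
  (∀ s ∈ S, d ∣ s) ∧ ∀ e : ℕ, (∀ s ∈ S, e ∣ s) → e ∣ d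

end Defs

/-- The set of minimal distances `Δ*(G)`. -/
def DeltaStar (G : Type*) [AddCommGroup G] : Set ℕ :=
  {d | ∃ G₀ : Set G, (DeltaSet G₀).Nonempty ∧ d = sInf (DeltaSet G₀)}

/-- The `p`-rank of a finite abelian group: `log_p` of the order of the `p`-torsion
subgroup `{x | p • x = 0}`. -/
noncomputable def pRank (G : Type*) [AddCommGroup G] (p : ℕ) : ℕ :=
  Nat.log p (Nat.card {x : G // p • x = 0})

/-- The rank of a finite abelian group: the maximum of the `p`-ranks over all primes. -/
noncomputable def rankG (G : Type*) [AddCommGroup G] : ℕ :=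
  sSup {r : ℕ | ∃ p : ℕ, p.Prime ∧ r = pRank G p}

section Aux

variable {G : Type*} [AddCommGroup G]

lemma IsZeroSumSeq.add {G₀ : Set G} {A B : Multiset G} (hA : IsZeroSumSeq G₀ A)
    (hB : IsZeroSumSeq G₀ B) : IsZeroSumSeq G₀ (A + B) := by
  refine ⟨fun x hx => ?_, by rw [Multiset.sum_add, hA.2, hB.2, add_zero]⟩
  rcases Multiset.mem_add.1 hx with h | h
  · exact hA.1 x h
  · exact hB.1 x h

lemma isZeroSumSeq_sum {G₀ : Set G} (l : Multiset (Multiset G))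
    (h : ∀ A ∈ l, IsZeroSumSeq G₀ A) : IsZeroSumSeq G₀ l.sum := by
  induction l using Multiset.induction_on with
  | empty => simp [IsZeroSumSeq]
  | cons a l ih =>
    rw [Multiset.sum_cons]
    exact (h a (by simp)).add (ih fun A hA => h A (Multiset.mem_cons_of_mem hA))

lemma IsZeroSumSeq.of_add {G₀ : Set G} {A B C : Multiset G} (hC : IsZeroSumSeq G₀ C)
    (hA : A.sum = 0) (h : C = A + B) : IsZeroSumSeq G₀ B := by
  refine ⟨fun x hx => hC.1 x (by rw [h]; exact Multiset.mem_add.2 (Or.inr hx)), ?_⟩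
  have := hC.2
  rwa [h, Multiset.sum_add, hA, zero_add] at this

lemma IsAtomSeq.mono {G₀ G₁ : Set G} {A : Multiset G} (hA : IsAtomSeq G₁ A)
    (h : ∀ x ∈ A, x ∈ G₀) : IsAtomSeq G₀ A := by
  refine ⟨⟨h, hA.1.2⟩, hA.2.1, fun B C hB hC hB0 hC0 e => ?_⟩
  refine hA.2.2 B C ⟨fun x hx => hA.1.1 x ?_, hB.2⟩ ⟨fun x hx => hA.1.1 x ?_, hC.2⟩ hB0 hC0 e
  · rw [e]; exact Multiset.mem_add.2 (Or.inl hx)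
  · rw [e]; exact Multiset.mem_add.2 (Or.inr hx)

/-- a nonempty zero-sum subsequence of an atom is the whole atom -/
lemma IsAtomSeq.eq_of_le {G₀ : Set G} {A B : Multiset G} (hA : IsAtomSeq G₀ A)
    (hBA : B ≤ A) (hB : B.sum = 0) (hB0 : B ≠ 0) : A = B := by
  obtain ⟨C, rfl⟩ := Multiset.le_iff_exists_add.1 hBA
  by_cases hC : C = 0
  · simp [hC]
  · exfalso
    refine hA.2.2 B C ⟨fun x hx => hA.1.1 x (Multiset.mem_add.2 (Or.inl hx)), hB⟩
      (hA.1.of_add hB rfl) hB0 hC rfl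

lemma exists_factorization {G₀ : Set G} (B : Multiset G) (hB : IsZeroSumSeq G₀ B) :
    ∃ l : Multiset (Multiset G), (∀ A ∈ l, IsAtomSeq G₀ A) ∧ l.sum = B := by
  induction h : Multiset.card B using Nat.strong_induction_on generalizing B with
  | _ n ih =>
    by_cases h0 : B = 0
    · exact ⟨0, by simp, by simp [h0]⟩
    by_cases hat : IsAtomSeq G₀ B
    · exact ⟨{B}, by simpa using hat, by simp⟩
    · have : ∃ A C : Multiset G, IsZeroSumSeq G₀ A ∧ IsZeroSumSeq G₀ C ∧ A ≠ 0 ∧ C ≠ 0 ∧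
          B = A + C := by
        by_contra hcon
        refine hat ⟨hB, h0, fun A C hA hC hA0 hC0 e => hcon ⟨A, C, hA, hC, hA0, hC0, e⟩⟩
      obtain ⟨A, C, hA, hC, hA0, hC0, e⟩ := this
      have hAp := Multiset.card_pos.2 hA0
      have hCp := Multiset.card_pos.2 hC0
      have hc : Multiset.card B = Multiset.card A + Multiset.card C := by rw [e, Multiset.card_add]
      obtain ⟨l1, h1, s1⟩ := ih _ (by omega) A hA rfl
      obtain ⟨l2, h2, s2⟩ := ih _ (by omega) C hC rfl
      refine ⟨l1 + l2, fun D hD => ?_, by rw [Multiset.sum_add, s1, s2, e]⟩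
      rcases Multiset.mem_add.1 hD with h | h
      · exact h1 D h
      · exact h2 D h

lemma card_eq_one_of_sum_atom {G₀ : Set G} {U : Multiset G} (hU : IsAtomSeq G₀ U)
    {l : Multiset (Multiset G)} (hl : ∀ A ∈ l, IsAtomSeq G₀ A) (h : l.sum = U) :
    Multiset.card l = 1 := by
  induction l using Multiset.induction_on with
  | empty => exact absurd h.symm (by simpa using hU.2.1)
  | cons a l _ =>
    have ha := hl a (by simp)
    rw [Multiset.sum_cons] at h
    have hls : IsZeroSumSeq G₀ l.sum :=
      isZeroSumSeq_sum l fun A hA => (hl A (Multiset.mem_cons_of_mem hA)).1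
    by_cases h0 : l.sum = 0
    · have : l = 0 := by
        by_contra hne
        obtain ⟨b, hb⟩ := Multiset.exists_mem_of_ne_zero hne
        have hb1 := Multiset.le_sum_of_mem hb
        rw [h0] at hb1
        exact (hl b (Multiset.mem_cons_of_mem hb)).2.1 (Multiset.le_zero.1 hb1)
      simp [this]
    · exact absurd h.symm (hU.2.2 _ _ ha.1 hls ha.2.1 h0)

lemma sum_ne_zero_of_card_pos {G₀ : Set G} {l : Multiset (Multiset G)}
    (hl : ∀ A ∈ l, IsAtomSeq G₀ A) (h : 0 < Multiset.card l) : l.sum ≠ 0 := by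
  intro h0
  obtain ⟨b, hb⟩ := Multiset.exists_mem_of_ne_zero (Multiset.card_pos.1 h)
  have hb1 := Multiset.le_sum_of_mem hb
  rw [h0] at hb1
  exact (hl b hb).2.1 (Multiset.le_zero.1 hb1)

lemma exists_delta_le {G₀ : Set G} {l₁ l₂ : Multiset (Multiset G)}
    (h1 : ∀ A ∈ l₁, IsAtomSeq G₀ A) (h2 : ∀ A ∈ l₂, IsAtomSeq G₀ A)
    (hs : l₁.sum = l₂.sum) (hlt : Multiset.card l₁ < Multiset.card l₂) :
    ∃ d ∈ DeltaSet G₀, d ≤ Multiset.card l₂ - Multiset.card l₁ := by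
  classical
  set B := l₂.sum with hB
  have hBz : IsZeroSumSeq G₀ B := isZeroSumSeq_sum l₂ fun A hA => (h2 A hA).1
  have hB0 : B ≠ 0 := sum_ne_zero_of_card_pos h2 (by omega)
  have hx : Multiset.card l₁ ∈ LengthSet G₀ B := ⟨l₁, rfl, h1, hs⟩
  have hy : Multiset.card l₂ ∈ LengthSet G₀ B := ⟨l₂, rfl, h2, rfl⟩
  have hex : ∃ y, y ∈ LengthSet G₀ B ∧ Multiset.card l₁ < y := ⟨_, hy, hlt⟩
  have hf := Nat.find_spec hex
  have hle : Nat.find hex ≤ Multiset.card l₂ := Nat.find_min' hex ⟨hy, hlt⟩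
  refine ⟨Nat.find hex - Multiset.card l₁, ⟨B, hBz, hB0, _, hx, _, hf.1, hf.2, rfl, ?_⟩, by omega⟩
  rintro z hz ⟨hz1, hz2⟩
  exact Nat.find_min hex hz2 ⟨hz, hz1⟩

lemma sInf_delta_le {G₀ : Set G} {l₁ l₂ : Multiset (Multiset G)}
    (h1 : ∀ A ∈ l₁, IsAtomSeq G₀ A) (h2 : ∀ A ∈ l₂, IsAtomSeq G₀ A)
    (hs : l₁.sum = l₂.sum) (hlt : Multiset.card l₁ < Multiset.card l₂) :
    sInf (DeltaSet G₀) ≤ Multiset.card l₂ - Multiset.card l₁ := by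
  obtain ⟨d, hd, hle⟩ := exists_delta_le h1 h2 hs hlt
  exact (Nat.sInf_le hd).trans hle

lemma crossNumber_add (A B : Multiset G) :
    crossNumber (A + B) = crossNumber A + crossNumber B := by
  simp [crossNumber]

lemma crossNumber_sum (l : Multiset (Multiset G)) :
    crossNumber l.sum = (l.map crossNumber).sum := by
  induction l using Multiset.induction_on with
  | empty => simp [crossNumber]
  | cons a l ih => simp [crossNumber_add, ih]

lemma crossNumber_sum_of_one (l : Multiset (Multiset G)) (h : ∀ A ∈ l, crossNumber A = 1) :
    crossNumber l.sum = Multiset.card l := by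
  rw [crossNumber_sum, Multiset.map_congr rfl h]; simp

lemma card_le_crossNumber_sum (l : Multiset (Multiset G)) (h : ∀ A ∈ l, 1 ≤ crossNumber A) :
    (Multiset.card l : ℚ) ≤ crossNumber l.sum := by
  rw [crossNumber_sum]
  have := Multiset.card_nsmul_le_sum (s := l.map crossNumber) (a := 1) (by simpa using h)
  simpa using this

lemma exists_sub_cover {G : Type*} [DecidableEq G] (l : Multiset (Multiset G)) (W : Multiset G)
    (h : W ≤ l.sum) :
    ∃ T ≤ l, Multiset.card T ≤ Multiset.card W ∧ W ≤ T.sum := by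
  induction l using Multiset.induction_on generalizing W with
  | empty => exact ⟨0, le_rfl, by simp, h⟩
  | cons a l ih =>
    rw [Multiset.sum_cons] at h
    obtain ⟨T, hT, hc, hW⟩ := ih (W - a) (tsub_le_iff_left.2 h)
    by_cases hd : Multiset.card (W - a) = Multiset.card W
    · have : W - a = W := Multiset.eq_of_le_of_card_le tsub_le_self hd.ge
      rw [this] at hW
      exact ⟨T, hT.trans (Multiset.le_cons_self _ _), by omega, hW⟩
    · have : Multiset.card (W - a) ≤ Multiset.card W := Multiset.card_le_card tsub_le_self
      refine ⟨a ::ₘ T, Multiset.cons_le_cons a hT, by rw [Multiset.card_cons]; omega, ?_⟩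
      rw [Multiset.sum_cons]
      exact tsub_le_iff_left.1 hW

lemma exchange {G₀ : Set G} {n : ℕ} {U : Multiset G} (hU : IsAtomSeq G₀ U)
    (Ws : Multiset (Multiset G)) (hW : ∀ W ∈ Ws, IsAtomSeq G₀ W ∧ Multiset.card W ≤ n)
    (l : Multiset (Multiset G)) (hl : ∀ A ∈ l, IsAtomSeq G₀ A)
    (hs : l.sum = U + Ws.sum) (hc : Multiset.card Ws + 1 < Multiset.card l) :
    sInf (DeltaSet G₀) ≤ n - 2 := by
  classical
  induction Ws using Multiset.induction_on generalizing l with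
  | empty =>
    have := card_eq_one_of_sum_atom hU hl (by simpa using hs)
    simp at hc; omega
  | cons W Ws ih =>
    obtain ⟨hWa, hWn⟩ := hW W (by simp)
    rw [Multiset.sum_cons] at hs
    rw [Multiset.card_cons] at hc
    obtain ⟨T, hT, hTc, hWT⟩ := exists_sub_cover l W
      (by rw [hs]; exact (Multiset.le_add_right _ _).trans (Multiset.le_add_left _ _))
    obtain ⟨R, rfl⟩ := Multiset.le_iff_exists_add.1 hT
    have hTa : ∀ A ∈ T, IsAtomSeq G₀ A := fun A hA => hl A (Multiset.mem_add.2 (Or.inl hA))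
    obtain ⟨S, hS⟩ := Multiset.le_iff_exists_add.1 hWT
    have hSz : IsZeroSumSeq G₀ S :=
      (isZeroSumSeq_sum T fun A hA => (hTa A hA).1).of_add hWa.1.2 hS
    obtain ⟨l', hl', hl's⟩ := exists_factorization S hSz
    rcases Nat.lt_or_ge (Multiset.card l' + 1) (Multiset.card T) with hlt | hge
    · have hpos : 0 < Multiset.card l' := by
        by_contra h0
        have : l' = 0 := Multiset.card_eq_zero.1 (by omega)
        rw [this] at hl's
        have h1 := card_eq_one_of_sum_atom hWa hTa (by rw [hS, ← hl's]; simp)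
        omega
      have := sInf_delta_le (G₀ := G₀) (l₁ := W ::ₘ l') (l₂ := T)
        (by intro A hA; rcases Multiset.mem_cons.1 hA with rfl | h
            · exact hWa
            · exact hl' A h) hTa (by rw [Multiset.sum_cons, hl's, hS]) (by simpa using hlt)
      rw [Multiset.card_cons] at this
      omega
    · refine ih (fun V hV => hW V (Multiset.mem_cons_of_mem hV)) (l' + R) ?_ ?_ ?_
      · intro A hA
        rcases Multiset.mem_add.1 hA with h | h
        · exact hl' A h
        · exact hl A (Multiset.mem_add.2 (Or.inr h))
      · rw [Multiset.sum_add, hS] at hs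
        rw [Multiset.sum_add, hl's]
        apply add_left_cancel (a := W)
        rw [← add_assoc, hs]; abel
      · rw [Multiset.card_add] at hc ⊢; omega

lemma pow_isAtomSeq [Finite G] {G₀ : Set G} {g : G} (hg : g ∈ G₀) :
    IsAtomSeq G₀ (Multiset.replicate (addOrderOf g) g) := by
  have hpos := addOrderOf_pos g
  refine ⟨⟨fun x hx => by rw [Multiset.eq_of_mem_replicate hx]; exact hg, ?_⟩, ?_, ?_⟩
  · rw [Multiset.sum_replicate, addOrderOf_nsmul_eq_zero]
  · intro h
    have := congrArg Multiset.card h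
    rw [Multiset.card_replicate, Multiset.card_zero] at this
    omega
  · intro A B hA hB hA0 hB0 e
    have hA1 : A = Multiset.replicate (Multiset.card A) g := Multiset.eq_replicate.2 ⟨rfl, fun b hb =>
      Multiset.eq_of_mem_replicate (n := addOrderOf g)
        (by rw [e]; exact Multiset.mem_add.2 (Or.inl hb))⟩
    have hs := hA.2
    rw [hA1, Multiset.sum_replicate] at hs
    have hd := Nat.le_of_dvd (Multiset.card_pos.2 hA0) (addOrderOf_dvd_of_nsmul_eq_zero hs)
    have hc := congrArg Multiset.card e
    rw [Multiset.card_add, Multiset.card_replicate] at hc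
    have := Multiset.card_pos.2 hB0
    omega

lemma crossNumber_replicate (m : ℕ) (g : G) :
    crossNumber (Multiset.replicate m g) = m * (addOrderOf g : ℚ)⁻¹ := by
  simp [crossNumber]

lemma crossNumber_pow [Finite G] (g : G) :
    crossNumber (Multiset.replicate (addOrderOf g) g) = 1 := by
  rw [crossNumber_replicate]
  have := addOrderOf_pos g
  field_simp

lemma card_le_of_crossNumber [Finite G] {W : Multiset G} (h : crossNumber W ≤ 1) :
    Multiset.card W ≤ AddMonoid.exponent G := by
  have hn : 0 < AddMonoid.exponent G := AddMonoid.exponent_pos.2 AddMonoid.ExponentExists.of_finite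
  have hn' : (0 : ℚ) < AddMonoid.exponent G := by exact_mod_cast hn
  have := Multiset.card_nsmul_le_sum
    (s := W.map (fun g => ((addOrderOf g : ℚ))⁻¹)) (a := ((AddMonoid.exponent G : ℚ))⁻¹) (by
      intro x hx
      obtain ⟨g, _, rfl⟩ := Multiset.mem_map.1 hx
      have h1 : (0 : ℚ) < addOrderOf g := by exact_mod_cast addOrderOf_pos g
      apply inv_anti₀ h1
      exact_mod_cast Nat.le_of_dvd hn (AddMonoid.addOrder_dvd_exponent g))
  change _ ≤ crossNumber W at this
  rw [Multiset.card_map, nsmul_eq_mul] at this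
  have h2 := this.trans h
  rw [← div_eq_mul_inv, div_le_one hn'] at h2
  exact_mod_cast h2

/-- non-LCN case -/
lemma nonLCN_bound [Finite G] {G₀ : Set G} {U : Multiset G} (hU : IsAtomSeq G₀ U)
    (hk : crossNumber U < 1) : sInf (DeltaSet G₀) ≤ AddMonoid.exponent G - 2 := by
  set n := AddMonoid.exponent G with hn
  have hnpos : 0 < n := AddMonoid.exponent_pos.2 AddMonoid.ExponentExists.of_finite
  have hdv : ∀ g : G, addOrderOf g ∣ n := fun g => AddMonoid.addOrder_dvd_exponent g
  let l₁ : Multiset (Multiset G) :=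
    U.bind fun g => Multiset.replicate (n / addOrderOf g) (Multiset.replicate (addOrderOf g) g)
  have hl₁ : ∀ A ∈ l₁, IsAtomSeq G₀ A := by
    intro A hA
    obtain ⟨g, hg, hA⟩ := Multiset.mem_bind.1 hA
    rw [Multiset.eq_of_mem_replicate hA]
    exact pow_isAtomSeq (hU.1.1 g hg)
  have hs : l₁.sum = (Multiset.replicate n U).sum := by
    rw [Multiset.sum_replicate]
    simp only [l₁, Multiset.sum_bind, Multiset.sum_replicate]
    have : (U.map fun g => (n / addOrderOf g) • Multiset.replicate (addOrderOf g) g)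
        = U.map fun g => n • ({g} : Multiset G) := by
      refine Multiset.map_congr rfl fun g _ => ?_
      rw [← Multiset.nsmul_singleton, ← mul_nsmul, Nat.mul_div_cancel' (hdv g)]
    rw [this, Multiset.sum_map_nsmul, Multiset.sum_map_singleton]
  have hc1 : (Multiset.card l₁ : ℚ) = crossNumber l₁.sum := by
    rw [crossNumber_sum_of_one]
    intro A hA
    obtain ⟨g, hg, hA⟩ := Multiset.mem_bind.1 hA
    rw [Multiset.eq_of_mem_replicate hA, crossNumber_pow]
  have hc2 : (Multiset.card l₁ : ℚ) = n * crossNumber U := by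
    rw [hc1, hs, crossNumber_sum]; simp
  have hlt : Multiset.card l₁ < n := by
    have : (0 : ℚ) < n := by exact_mod_cast hnpos
    have : (Multiset.card l₁ : ℚ) < n := by rw [hc2]; nlinarith
    exact_mod_cast this
  have hge : Multiset.card U ≤ Multiset.card l₁ := by
    simp only [l₁, Multiset.card_bind]
    have := Multiset.card_nsmul_le_sum (s := U.map (Multiset.card ∘ fun g => Multiset.replicate (n / addOrderOf g)
      (Multiset.replicate (addOrderOf g) g))) (a := 1) (by
        intro x hx
        obtain ⟨g, _, rfl⟩ := Multiset.mem_map.1 hx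
        simp only [Function.comp, Multiset.card_replicate]
        exact Nat.div_pos (Nat.le_of_dvd hnpos (hdv g)) (addOrderOf_pos g))
    simpa using this
  have hU2 : 2 ≤ Multiset.card U := by
    have h1 := Multiset.card_pos.2 hU.2.1
    by_contra hlt2
    obtain ⟨g, rfl⟩ := Multiset.card_eq_one.1 (show Multiset.card U = 1 by omega)
    have : g = 0 := by simpa using hU.1.2
    subst this
    simp [crossNumber] at hk
  have := sInf_delta_le hl₁ (l₂ := Multiset.replicate n U)
    (fun A hA => by rw [Multiset.eq_of_mem_replicate hA]; exact hU) hs (by simpa using hlt)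
  rw [Multiset.card_replicate] at this
  omega

lemma IsAtomSeq.count_lt [DecidableEq G] [Finite G] {G₀ : Set G} {U : Multiset G}
    (hU : IsAtomSeq G₀ U) (g : G) (hne : U ≠ Multiset.replicate (addOrderOf g) g) :
    U.count g < addOrderOf g := by
  by_contra h
  have hle : Multiset.replicate (addOrderOf g) g ≤ U :=
    Multiset.le_count_iff_replicate_le.1 (by omega)
  refine hne (hU.eq_of_le hle ?_ ?_)
  · rw [Multiset.sum_replicate, addOrderOf_nsmul_eq_zero]
  · intro h0
    have h1 := congrArg Multiset.card h0
    have h2 := addOrderOf_pos g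
    rw [Multiset.card_replicate, Multiset.card_zero] at h1
    omega

/-- LCN case, bound by size of the support -/
lemma LCN_support_bound [DecidableEq G] [Finite G] {G₀ : Set G} (hL : IsLCNSet G₀)
    {U : Multiset G} (hU : IsAtomSeq G₀ U) (hk : 1 < crossNumber U) :
    sInf (DeltaSet G₀) ≤ U.toFinset.card - 2 := by
  have hlt : ∀ g, U.count g < addOrderOf g := fun g => hU.count_lt g (by
    rintro h; rw [h, crossNumber_pow] at hk; exact lt_irrefl _ hk)
  let l₂ : Multiset (Multiset G) :=
    U.toFinset.val.map fun g => Multiset.replicate (addOrderOf g) g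
  let S : Multiset G := ∑ g ∈ U.toFinset, Multiset.replicate (addOrderOf g - U.count g) g
  have hl₂ : ∀ A ∈ l₂, IsAtomSeq G₀ A := by
    intro A hA
    obtain ⟨g, hg, rfl⟩ := Multiset.mem_map.1 hA
    exact pow_isAtomSeq (hU.1.1 g (Multiset.mem_toFinset.1 hg))
  have hUe : U = ∑ g ∈ U.toFinset, Multiset.replicate (U.count g) g := by
    conv_lhs => rw [← Multiset.toFinset_sum_count_nsmul_eq U]
    simp only [Multiset.nsmul_singleton]
  have hsum : l₂.sum = U + S := by
    conv_rhs => rw [hUe]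
    simp only [S]
    rw [← Finset.sum_add_distrib]
    change ∑ g ∈ U.toFinset, Multiset.replicate (addOrderOf g) g = _
    refine Finset.sum_congr rfl fun g _ => ?_
    rw [← Multiset.replicate_add]
    congr 1
    have := hlt g
    omega
  have hSz : IsZeroSumSeq G₀ S :=
    (isZeroSumSeq_sum l₂ fun A hA => (hl₂ A hA).1).of_add hU.1.2 hsum
  obtain ⟨l', hl', hl's⟩ := exists_factorization S hSz
  have hS0 : S ≠ 0 := by
    intro h0
    rw [h0, add_zero] at hsum
    obtain ⟨g, hg⟩ := Multiset.exists_mem_of_ne_zero hU.2.1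
    have h1 : Multiset.replicate (addOrderOf g) g ≤ U := by
      have hm : Multiset.replicate (addOrderOf g) g ∈ l₂ :=
        Multiset.mem_map.2 ⟨g, Multiset.mem_toFinset.2 hg, rfl⟩
      have := Multiset.le_sum_of_mem hm
      rwa [hsum] at this
    have := Multiset.le_count_iff_replicate_le.2 h1
    have := hlt g
    omega
  have hpos : 0 < Multiset.card l' := by
    rw [Multiset.card_pos]; rintro rfl; exact hS0 (by rw [← hl's]; simp)
  have hcard2 : Multiset.card l₂ = U.toFinset.card := Multiset.card_map _ _
  have hkS : crossNumber U + crossNumber S = U.toFinset.card := by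
    rw [← crossNumber_add, ← hsum, crossNumber_sum_of_one, hcard2]
    intro A hA
    obtain ⟨g, hg, rfl⟩ := Multiset.mem_map.1 hA
    exact crossNumber_pow g
  have hj : (Multiset.card l' : ℚ) ≤ crossNumber S := by
    rw [← hl's]
    exact card_le_crossNumber_sum l' fun A hA => hL A (hl' A hA)
  have hlt2 : Multiset.card l' + 1 < U.toFinset.card := by
    have : (Multiset.card l' : ℚ) + 1 < U.toFinset.card := by linarith
    exact_mod_cast this
  have := sInf_delta_le (G₀ := G₀) (l₁ := U ::ₘ l') (l₂ := l₂)
    (by intro A hA; rcases Multiset.mem_cons.1 hA with rfl | h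
        · exact hU
        · exact hl' A h) hl₂ (by rw [Multiset.sum_cons, hl's, hsum])
    (by rw [Multiset.card_cons, hcard2]; exact hlt2)
  rw [Multiset.card_cons, hcard2] at this
  omega

lemma exists_crossNumber_ne_one {G₀ : Set G} (h : (DeltaSet G₀).Nonempty) :
    ∃ U, IsAtomSeq G₀ U ∧ crossNumber U ≠ 1 := by
  by_contra hcon
  push Not at hcon
  obtain ⟨d, B, _, _, x, ⟨l₁, rfl, h1, s1⟩, y, ⟨l₂, rfl, h2, s2⟩, hlt, _⟩ := h
  have e1 := crossNumber_sum_of_one l₁ fun A hA => hcon A (h1 A hA)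
  have e2 := crossNumber_sum_of_one l₂ fun A hA => hcon A (h2 A hA)
  rw [s1] at e1
  rw [s2, e1] at e2
  have : Multiset.card l₁ = Multiset.card l₂ := by exact_mod_cast e2
  omega

lemma mem_closure_nat [Finite G] {E : Finset G} {x : G}
    (h : x ∈ AddSubgroup.closure (E : Set G)) : ∃ f : G → ℕ, ∑ a ∈ E, f a • a = x := by
  have h' : x ∈ AddSubmonoid.closure (E : Set G) := by
    rw [← AddSubgroup.closure_toAddSubmonoid_of_finite]; exact h
  obtain ⟨f, _, hf⟩ := AddSubmonoid.mem_closure_finset.1 h'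
  exact ⟨f, hf⟩

lemma card_le_pRank [Finite G] {p : ℕ} (hp : p.Prime) {k : ℕ} (H : AddSubgroup G)
    (F : (Fin k → Fin p) → H)
    (hF : ∀ c c', (∃ y : H, F c = F c' + p • y) → c = c') : k ≤ pRank G p := by
  have hp1 := hp.one_lt
  let φ : H →+ H := nsmulAddMonoidHom p
  have hinj : Function.Injective fun c => (QuotientAddGroup.mk (F c) : H ⧸ φ.range) := by
    intro c c' h
    have := QuotientAddGroup.eq.1 h.symm
    obtain ⟨y, hy⟩ := this
    refine hF c c' ⟨y, ?_⟩
    have hy' : p • y = -F c' + F c := hy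
    rw [hy']; abel
  have h1 := Nat.card_le_card_of_injective _ hinj
  rw [Nat.card_fun, Nat.card_eq_fintype_card, Nat.card_eq_fintype_card, Fintype.card_fin,
    Fintype.card_fin] at h1
  have h2 : Nat.card (H ⧸ φ.range) = Nat.card φ.ker := AddSubgroup.index_range (f := φ)
  have h3 : Nat.card φ.ker ≤ Nat.card {x : G // p • x = 0} := by
    refine Nat.card_le_card_of_injective
      (fun y => ⟨((y : H) : G), ?_⟩) ?_
    · have hy : p • (y : H) = 0 := y.2
      have := congrArg (Subtype.val) hy
      simpa using this
    · intro y z h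
      exact Subtype.ext (Subtype.ext (by simpa using h))
  exact Nat.le_log_of_pow_le hp1 (by omega)

lemma rank_select [DecidableEq G] [Finite G] {p : ℕ} (hp : p.Prime) (X : Finset G) :
    ∃ E ⊆ X, E.card ≤ pRank G p ∧ ∀ x ∈ AddSubgroup.closure (X : Set G),
      ∃ M : ℕ, ¬ p ∣ M ∧ M • x ∈ AddSubgroup.closure (E : Set G) := by
  let P : Finset G → Prop := fun E => ∀ x ∈ AddSubgroup.closure (X : Set G),
      ∃ M : ℕ, ¬ p ∣ M ∧ M • x ∈ AddSubgroup.closure (E : Set G)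
  have hPX : P X := fun x hx => ⟨1, hp.one_lt.ne' ∘ Nat.dvd_one.1, by simpa using hx⟩
  classical
  obtain ⟨E, hE, hmin⟩ := Finset.exists_min_image (X.powerset.filter P) Finset.card
    ⟨X, by simp [hPX]⟩
  rw [Finset.mem_filter, Finset.mem_powerset] at hE
  refine ⟨E, hE.1, ?_, hE.2⟩
  let s := E.equivFin.symm
  have hsE : ∀ i, ((s i : E) : G) ∈ AddSubgroup.closure (E : Set G) := fun i =>
    AddSubgroup.subset_closure (s i).2
  refine card_le_pRank hp (AddSubgroup.closure (E : Set G))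
    (fun c => ∑ i, (c i : ℕ) • (⟨(s i : G), hsE i⟩ : AddSubgroup.closure (E : Set G))) ?_
  rintro c c' ⟨y, hy⟩
  by_contra hne
  obtain ⟨j, hj⟩ : ∃ j, c j ≠ c' j := by
    by_contra h; push Not at h; exact hne (funext h)
  obtain ⟨b, hb⟩ := mem_closure_nat y.2
  have hb' : ∑ i, b (s i) • (s i : G) = y := by
    rw [← hb, ← Finset.sum_coe_sort E, ← Equiv.sum_comp s]
  have hy' : ∑ i, (c i : ℕ) • (s i : G) = ∑ i, (c' i : ℕ) • (s i : G) + p • (y : G) := by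
    have := congrArg Subtype.val hy
    simpa [AddSubgroup.val_finsetSum] using this
  rw [← hb', Finset.smul_sum] at hy'
  let z : Fin E.card → ℤ := fun i => (c i : ℤ) - (c' i : ℤ) - p * b (s i)
  have hz : ∑ i, z i • (s i : G) = 0 := by
    simp only [z, sub_smul, Finset.sum_sub_distrib, mul_smul, natCast_zsmul]
    rw [hy']; abel
  have hzj : ¬ (p : ℤ) ∣ z j := by
    intro hd
    have h1 : (p : ℤ) ∣ (c j : ℤ) - (c' j : ℤ) := by
      have := dvd_add hd (dvd_mul_right (p : ℤ) (b (s j)))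
      simpa [z] using this
    have h2 := Int.eq_zero_of_abs_lt_dvd h1 (by
      have := (c j).2; have := (c' j).2
      rw [abs_lt]; constructor <;> omega)
    exact hj (Fin.ext (by omega))
  -- `e` can be removed
  let e : G := s j
  have heE : e ∈ E := (s j).2
  have hze : z j • e ∈ AddSubgroup.closure ((E.erase e : Finset G) : Set G) := by
    rw [← Finset.add_sum_erase _ _ (Finset.mem_univ j)] at hz
    rw [show z j • e = -∑ i ∈ Finset.univ.erase j, z i • (s i : G) from eq_neg_of_add_eq_zero_left hz]
    refine neg_mem (sum_mem fun i hi => zsmul_mem (AddSubgroup.subset_closure ?_) _)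
    have hij := (Finset.mem_erase.1 hi).1
    refine Finset.mem_coe.2 (Finset.mem_erase.2 ⟨fun h => hij ?_, (s i).2⟩)
    exact s.injective (Subtype.ext h)
  have hzn : ((z j).natAbs) • e ∈ AddSubgroup.closure ((E.erase e : Finset G) : Set G) := by
    rcases Int.natAbs_eq (z j) with h | h
    · rw [← natCast_zsmul, ← h]; exact hze
    · rw [← natCast_zsmul, show (((z j).natAbs : ℕ) : ℤ) = - z j by omega, neg_smul]
      exact neg_mem hze
  have hPe : P (E.erase e) := by
    intro x hx
    obtain ⟨M, hM, hMx⟩ := hE.2 x hx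
    refine ⟨(z j).natAbs * M, fun hd => ?_, ?_⟩
    · rcases hp.dvd_mul.1 hd with h | h
      · exact hzj (Int.natCast_dvd.2 h)
      · exact hM h
    · obtain ⟨f, hf⟩ := mem_closure_nat hMx
      rw [mul_smul, ← hf, ← Finset.add_sum_erase _ _ heE, smul_add]
      refine add_mem ?_ (nsmul_mem (sum_mem fun a ha => nsmul_mem
        (AddSubgroup.subset_closure (Finset.mem_coe.2 ha)) _) _)
      rw [smul_comm]
      exact nsmul_mem hzn _
  have := hmin (E.erase e) (by
    rw [Finset.mem_filter, Finset.mem_powerset]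
    exact ⟨(Finset.erase_subset _ _).trans hE.1, hPe⟩)
  have h1 := Finset.card_erase_lt_of_mem heE
  omega

lemma pRank_le_card [Finite G] (p : ℕ) : pRank G p ≤ Nat.card G := by
  unfold pRank
  refine (Nat.log_le_self _ _).trans ?_
  exact Nat.card_le_card_of_injective _ Subtype.val_injective

lemma bddAbove_pRank [Finite G] : BddAbove {r : ℕ | ∃ p : ℕ, p.Prime ∧ r = pRank G p} :=
  ⟨Nat.card G, by rintro r ⟨p, _, rfl⟩; exact pRank_le_card p⟩

lemma pRank_le_rankG [Finite G] {p : ℕ} (hp : p.Prime) : pRank G p ≤ rankG G :=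
  le_csSup bddAbove_pRank ⟨p, hp, rfl⟩

/-- If a set of naturals is closed under addition, contains `n`, `0` and for every prime `p` an
element not divisible by `p`, then it contains an element congruent to `-1` mod `n`. -/
lemma exists_neg_one {n : ℕ} (hn : 0 < n) (J : AddSubmonoid ℕ)
    (hJ : ∀ p : ℕ, p.Prime → ∃ M ∈ J, ¬ p ∣ M) : ∃ m ∈ J, n ∣ m + 1 := by
  let J' : AddSubgroup ℤ :=
    { carrier := {z | ∃ m ∈ J, (n : ℤ) ∣ z - m}
      zero_mem' := ⟨0, J.zero_mem, by simp⟩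
      add_mem' := by
        rintro a b ⟨m, hm, h⟩ ⟨m', hm', h'⟩
        refine ⟨m + m', J.add_mem hm hm', ?_⟩
        have := dvd_add h h'
        push_cast
        rwa [show a + b - ((m : ℤ) + m') = a - m + (b - m') by ring]
      neg_mem' := by
        rintro a ⟨m, hm, h⟩
        refine ⟨(n - 1) * m, by simpa using J.nsmul_mem hm (n - 1), ?_⟩
        have e : -a - (((n - 1) * m : ℕ) : ℤ) = -(a - m) - n * m := by
          push_cast [Nat.cast_sub hn]; ring
        rw [e]
        exact dvd_sub (dvd_neg.2 h) (dvd_mul_right _ _) }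
  obtain ⟨a, ha⟩ := Int.subgroup_cyclic J'
  rw [← AddSubgroup.zmultiples_eq_closure] at ha
  have hdiv : ∀ M ∈ J, a ∣ (M : ℤ) := by
    intro M hM
    have : (M : ℤ) ∈ J' := ⟨M, hM, by simp⟩
    rwa [ha, Int.mem_zmultiples_iff] at this
  have ha1 : a.natAbs = 1 := by
    by_contra h
    obtain ⟨p, hp, hpa⟩ := Nat.exists_prime_and_dvd h
    obtain ⟨M, hM, hpM⟩ := hJ p hp
    exact hpM (hpa.trans (Int.natAbs_dvd_natAbs.2 (hdiv M hM)))
  have : (-1 : ℤ) ∈ J' := by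
    rw [ha, Int.mem_zmultiples_iff]
    exact Int.natAbs_dvd_natAbs.1 (by simp [ha1])
  obtain ⟨m, hm, h⟩ := this
  refine ⟨m, hm, ?_⟩
  have h2 := dvd_neg.2 h
  rw [show -(-1 - (m : ℤ)) = ((m + 1 : ℕ) : ℤ) by push_cast; ring] at h2
  exact_mod_cast h2

/-- The main bound in the LCN case when the support is large. -/
lemma LCN_large_bound [DecidableEq G] [Finite G] {G₀ : Set G}
    {U : Multiset G} (hU : IsAtomSeq G₀ U) (hk : 1 < crossNumber U)
    (hmin : ∀ A, IsAtomSeq G₀ A → A.toFinset.card < U.toFinset.card → crossNumber A = 1)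
    (hbig : rankG G + 2 ≤ U.toFinset.card) :
    sInf (DeltaSet G₀) ≤ AddMonoid.exponent G - 2 := by
  set n := AddMonoid.exponent G with hn
  have hnpos : 0 < n := AddMonoid.exponent_pos.2 AddMonoid.ExponentExists.of_finite
  obtain ⟨h, hh⟩ := Multiset.exists_mem_of_ne_zero hU.2.1
  set X := U.toFinset with hX
  have hhX : h ∈ X := Multiset.mem_toFinset.2 hh
  have hXG : ∀ x ∈ X, x ∈ G₀ := fun x hx => hU.1.1 x (Multiset.mem_toFinset.1 hx)
  set X' := X.erase h with hX'
  set v := U.count h with hv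
  -- factorizations over small subsets
  have hfac : ∀ Y : Finset G, Y ⊆ X → Y.card < X.card → ∀ S : Multiset G, (∀ x ∈ S, x ∈ Y) →
      S.sum = 0 → ∃ l : Multiset (Multiset G),
        (∀ A ∈ l, IsAtomSeq G₀ A ∧ crossNumber A = 1) ∧ l.sum = S := by
    intro Y hY hYc S hS hS0
    obtain ⟨l, hl, hls⟩ := exists_factorization (G₀ := (Y : Set G)) S ⟨hS, hS0⟩
    refine ⟨l, fun A hA => ?_, hls⟩
    have hA' := hl A hA
    have hat : IsAtomSeq G₀ A := hA'.mono fun x hx => hXG x (hY (hA'.1.1 x hx))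
    refine ⟨hat, hmin A hat (lt_of_le_of_lt (Finset.card_le_card ?_) hYc)⟩
    intro x hx
    exact hA'.1.1 x (Multiset.mem_toFinset.1 hx)
  have hdec : ∀ S : Multiset G, ∃ T, S = Multiset.replicate (S.count h) h + T ∧ T = S.filter (· ≠ h) := by
    intro S
    refine ⟨_, ?_, rfl⟩
    rw [← Multiset.filter_eq' S h]
    exact (Multiset.filter_add_not _ _).symm
  obtain ⟨U', hUU', hU'e⟩ := hdec U
  have hU'X : ∀ x ∈ U', x ∈ X' := by
    intro x hx
    rw [hU'e, Multiset.mem_filter] at hx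
    exact Finset.mem_erase.2 ⟨hx.2, Multiset.mem_toFinset.2 hx.1⟩
  have hvK : v • h ∈ AddSubgroup.closure (X' : Set G) := by
    have h0 := hU.1.2
    rw [hUU', Multiset.sum_add, Multiset.sum_replicate] at h0
    rw [eq_neg_of_add_eq_zero_left h0]
    refine neg_mem (AddSubgroup.multiset_sum_mem _ _ fun x hx => AddSubgroup.subset_closure ?_)
    exact hU'X x hx
  let J : AddSubmonoid ℕ :=
    { carrier := {M | ∃ (Ws : Multiset (Multiset G)) (T : Multiset G),
        (∀ A ∈ Ws, IsAtomSeq G₀ A ∧ crossNumber A = 1) ∧ (∀ x ∈ T, x ∈ X') ∧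
        Ws.sum = Multiset.replicate (M * v) h + T}
      zero_mem' := ⟨0, 0, by simp, by simp, by simp⟩
      add_mem' := by
        rintro a b ⟨W, T, h1, h2, h3⟩ ⟨W', T', h1', h2', h3'⟩
        refine ⟨W + W', T + T', fun A hA => ?_, fun x hx => ?_, ?_⟩
        · exact (Multiset.mem_add.1 hA).elim (h1 A) (h1' A)
        · exact (Multiset.mem_add.1 hx).elim (h2 x) (h2' x)
        · rw [Multiset.sum_add, h3, h3', add_mul, Multiset.replicate_add]; abel }
  obtain ⟨m, ⟨Ws, T, hWs, hT, hsum⟩, hmn⟩ := exists_neg_one hnpos J (by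
    intro p hp
    obtain ⟨E, hEX, hEc, hE⟩ := rank_select hp X'
    obtain ⟨M, hM, hMv⟩ := hE _ hvK
    obtain ⟨f, hf⟩ := mem_closure_nat (neg_mem hMv)
    refine ⟨M, ?_, hM⟩
    have hpr := pRank_le_rankG (G := G) hp
    have hTm : ∀ x ∈ ∑ a ∈ E, Multiset.replicate (f a) a, x ∈ E := by
      intro x hx
      obtain ⟨a, ha, hxa⟩ := Multiset.mem_sum.1 hx
      rwa [Multiset.eq_of_mem_replicate hxa]
    obtain ⟨l, hl, hls⟩ := hfac (insert h E)
      (Finset.insert_subset hhX (hEX.trans (Finset.erase_subset _ _)))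
      (by have := Finset.card_insert_le h E; omega)
      (Multiset.replicate (M * v) h + ∑ a ∈ E, Multiset.replicate (f a) a)
      (by
        intro x hx
        rcases Multiset.mem_add.1 hx with hx | hx
        · rw [Multiset.eq_of_mem_replicate hx]; exact Finset.mem_insert_self _ _
        · exact Finset.mem_insert_of_mem (hTm x hx))
      (by
        rw [Multiset.sum_add, Multiset.sum_sum, Multiset.sum_replicate]
        simp only [Multiset.sum_replicate]
        rw [hf, mul_smul]; abel)
    exact ⟨l, _, hl, fun x hx => hEX (hTm x hx), hls⟩)
  -- split off the powers of `h`
  have hdvd : addOrderOf h ∣ v + m * v := by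
    have : v + m * v = (m + 1) * v := by ring
    rw [this]
    exact ((AddMonoid.addOrder_dvd_exponent h).trans hmn).mul_right v
  obtain ⟨y, hy⟩ := hdvd
  have hwhole : U + Ws.sum = y • Multiset.replicate (addOrderOf h) h + (U' + T) := by
    rw [hsum]
    have : y • Multiset.replicate (addOrderOf h) h
        = Multiset.replicate v h + Multiset.replicate (m * v) h := by
      rw [← Multiset.replicate_add, hy, ← Multiset.nsmul_singleton, ← Multiset.nsmul_singleton,
        ← mul_nsmul]
    rw [this]
    conv_lhs => rw [hUU']
    abel
  obtain ⟨l, hl, hls⟩ := hfac X' (Finset.erase_subset _ _) (Finset.card_erase_lt_of_mem hhX)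
    (U' + T) (fun x hx => (Multiset.mem_add.1 hx).elim (hU'X x) (hT x)) (by
      have h1 : (U + Ws.sum).sum = 0 :=
        (hU.1.add (isZeroSumSeq_sum Ws fun A hA => (hWs A hA).1.1)).2
      rw [hwhole, Multiset.sum_add, Multiset.sum_nsmul, Multiset.sum_replicate,
        addOrderOf_nsmul_eq_zero] at h1
      simpa using h1)
  have hall : ∀ A ∈ Multiset.replicate y (Multiset.replicate (addOrderOf h) h) + l,
      IsAtomSeq G₀ A ∧ crossNumber A = 1 := by
    intro A hA
    rcases Multiset.mem_add.1 hA with hA | hA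
    · rw [Multiset.eq_of_mem_replicate hA]
      exact ⟨pow_isAtomSeq (hU.1.1 h hh), crossNumber_pow h⟩
    · exact hl A hA
  have hallsum : (Multiset.replicate y (Multiset.replicate (addOrderOf h) h) + l).sum
      = U + Ws.sum := by
    rw [hwhole, Multiset.sum_add, Multiset.sum_replicate, hls]
  refine exchange hU Ws (fun W hW => ⟨(hWs W hW).1, card_le_of_crossNumber (hWs W hW).2.le⟩)
    _ (fun A hA => (hall A hA).1) hallsum ?_
  have e1 := crossNumber_sum_of_one _ fun A hA => (hall A hA).2
  rw [hallsum, crossNumber_add, crossNumber_sum_of_one Ws fun A hA => (hWs A hA).2] at e1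
  have : ((Multiset.card Ws : ℕ) : ℚ) + 1
      < Multiset.card (Multiset.replicate y (Multiset.replicate (addOrderOf h) h) + l) := by
    rw [← e1]; linarith
  exact_mod_cast this

lemma upper_bound [Finite G] {G₀ : Set G} (hne : (DeltaSet G₀).Nonempty) :
    sInf (DeltaSet G₀) ≤ max (AddMonoid.exponent G - 2) (rankG G - 1) := by
  classical
  by_cases hL : IsLCNSet G₀
  · have hex : ∃ k, ∃ U, IsAtomSeq G₀ U ∧ 1 < crossNumber U ∧ U.toFinset.card = k := by
      obtain ⟨U, hU, hk⟩ := exists_crossNumber_ne_one hne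
      exact ⟨_, U, hU, lt_of_le_of_ne (hL U hU) (Ne.symm hk), rfl⟩
    obtain ⟨U, hU, hk, hc⟩ := Nat.find_spec hex
    by_cases hbig : rankG G + 2 ≤ U.toFinset.card
    · refine le_max_of_le_left (LCN_large_bound hU hk ?_ hbig)
      intro A hA hlt
      by_contra hA1
      rw [hc] at hlt
      exact Nat.find_min hex hlt ⟨A, hA, lt_of_le_of_ne (hL A hA) (Ne.symm hA1), rfl⟩
    · have := LCN_support_bound hL hU hk
      exact le_max_of_le_right (by omega)
  · unfold IsLCNSet at hL
    push Not at hL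
    obtain ⟨U, hU, hk⟩ := hL
    exact le_max_of_le_left (nonLCN_bound hU hk)

lemma delta_lower {G₀ : Set G} (ψ : Multiset G →+ ℤ) {N k : ℕ} (hN : 0 < N)
    (h : ∀ A, IsAtomSeq G₀ A → ((N * k : ℕ) : ℤ) ∣ ψ A - N) :
    ∀ d ∈ DeltaSet G₀, k ≤ d := by
  rintro d ⟨B, _, _, x, ⟨l₁, rfl, h1, s1⟩, y, ⟨l₂, rfl, h2, s2⟩, hlt, rfl, _⟩
  have key : ∀ l : Multiset (Multiset G), (∀ A ∈ l, IsAtomSeq G₀ A) →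
      ((N * k : ℕ) : ℤ) ∣ ψ l.sum - N * Multiset.card l := by
    intro l
    induction l using Multiset.induction_on with
    | empty => simp
    | cons a l ih =>
      intro hl
      have := dvd_add (h a (hl a (by simp))) (ih fun A hA => hl A (Multiset.mem_cons_of_mem hA))
      rw [Multiset.sum_cons, _root_.map_add, Multiset.card_cons]
      push_cast at this ⊢
      rwa [show ψ a + ψ l.sum - (N : ℤ) * (Multiset.card l + 1)
        = ψ a - N + (ψ l.sum - N * Multiset.card l) by ring]
  have := dvd_sub (key l₁ h1) (key l₂ h2)
  rw [s1, s2] at this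
  have e : ψ B - (N : ℤ) * Multiset.card l₁ - (ψ B - N * Multiset.card l₂)
      = ((N * (Multiset.card l₂ - Multiset.card l₁) : ℕ) : ℤ) := by
    push_cast [Nat.cast_sub hlt.le]; ring
  rw [e] at this
  have h3 := Nat.dvd_of_mul_dvd_mul_left hN (Int.natCast_dvd_natCast.1 this)
  exact Nat.le_of_dvd (by omega) h3

lemma exists_star_exp [Finite G] (hn : 3 ≤ AddMonoid.exponent G) :
    ∃ d ∈ DeltaStar G, AddMonoid.exponent G - 2 ≤ d := by
  classical
  obtain ⟨g, hg⟩ := AddMonoid.exists_addOrderOf_eq_exponent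
    (AddMonoid.ExponentExists.of_finite (G := G))
  set n := AddMonoid.exponent G with hnd
  have hng : addOrderOf (-g) = n := by rw [addOrderOf_neg, hg]
  have hne : g ≠ -g := by
    intro h
    have h2 : 2 • g = 0 := by rw [two_nsmul]; nth_rewrite 2 [h]; simp
    have := Nat.le_of_dvd (by norm_num) (addOrderOf_dvd_of_nsmul_eq_zero h2)
    omega
  let G₀ : Set G := {g, -g}
  have hpair : ∀ A, IsAtomSeq G₀ A → A = Multiset.replicate n g ∨ A = Multiset.replicate n (-g) ∨
      A = {g, -g} := by
    intro A hA
    by_cases h1 : A = Multiset.replicate n g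
    · exact Or.inl h1
    by_cases h2 : A = Multiset.replicate n (-g)
    · exact Or.inr (Or.inl h2)
    refine Or.inr (Or.inr ?_)
    have c1 := hA.count_lt g (by rwa [hg])
    have c2 := hA.count_lt (-g) (by rwa [hng])
    rw [hg] at c1
    rw [hng] at c2
    have hAe : A = Multiset.replicate (A.count g) g + Multiset.replicate (A.count (-g)) (-g) := by
      ext x
      rw [Multiset.count_add, Multiset.count_replicate, Multiset.count_replicate]
      by_cases hx : x ∈ A
      · rcases hA.1.1 x hx with rfl | hx'
        · simp [hne.symm]
        · rw [Set.mem_singleton_iff] at hx'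
          subst hx'
          simp [hne]
      · have : A.count x = 0 := Multiset.count_eq_zero.2 hx
        split_ifs with e1 e2 e2 <;> simp_all
    have hs := hA.1.2
    rw [hAe, Multiset.sum_add, Multiset.sum_replicate, Multiset.sum_replicate] at hs
    have hz : ((A.count g : ℤ) - A.count (-g)) • g = 0 := by
      rw [sub_smul, natCast_zsmul, natCast_zsmul, sub_eq_add_neg, ← smul_neg]; exact hs
    have hdv := addOrderOf_dvd_iff_zsmul_eq_zero.2 hz
    rw [hg] at hdv
    have heq := Int.eq_zero_of_abs_lt_dvd hdv (by rw [abs_lt]; constructor <;> omega)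
    have hpos : 0 < A.count g := by
      by_contra h0
      apply hA.2.1
      rw [hAe, show A.count g = 0 by omega, show A.count (-g) = 0 by omega]
      simp
    refine hA.eq_of_le ?_ (by simp) (by simp)
    rw [Multiset.le_iff_count]
    intro x
    by_cases hx : x = g
    · subst hx
      simp [hne]
      exact hpos
    · by_cases hx' : x = -g
      · subst hx'
        simp [hne.symm]
        omega
      · simp [hx, hx']
  let ψ : Multiset G →+ ℤ :=
    { toFun := fun A => (A.count g : ℤ) + (n - 1) * A.count (-g)
      map_zero' := by simp
      map_add' := by intro A B; simp only [Multiset.count_add]; push_cast; ring }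
  have hlow : ∀ d ∈ DeltaSet G₀, n - 2 ≤ d := by
    refine delta_lower ψ (N := n) (by omega) ?_
    intro A hA
    have hcast : ((n * (n - 2) : ℕ) : ℤ) = (n : ℤ) * (n - 2) := by
      push_cast [Nat.cast_sub (show 2 ≤ n by omega)]; ring
    rw [hcast]
    rcases hpair A hA with rfl | rfl | rfl
    · simp [ψ, Multiset.count_replicate, hne]
    · simp only [ψ, AddMonoidHom.coe_mk, ZeroHom.coe_mk, Multiset.count_replicate, if_neg hne.symm,
        if_true]
      exact ⟨1, by push_cast; ring⟩
    · simp [ψ, hne, hne.symm]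
  have hat : IsAtomSeq G₀ ({g, -g} : Multiset G) := by
    refine ⟨⟨by simp [G₀], by simp⟩, by simp, ?_⟩
    intro A B hA hB hA0 hB0 e
    have hc := congrArg Multiset.card e
    rw [Multiset.card_add] at hc
    have hA1 := Multiset.card_pos.2 hA0
    have hB1 := Multiset.card_pos.2 hB0
    simp at hc
    obtain ⟨a, rfl⟩ := Multiset.card_eq_one.1 (show Multiset.card A = 1 by omega)
    have ha0 : a = 0 := by simpa using hA.2
    have : a ∈ ({g, -g} : Multiset G) := by rw [e]; simp
    have hg0 : g = 0 := by
      subst ha0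
      simpa [eq_comm] using this
    exact hne (by simp [hg0])
  obtain ⟨d, hd, -⟩ := exists_delta_le (G₀ := G₀)
    (l₁ := {Multiset.replicate n g, Multiset.replicate n (-g)})
    (l₂ := Multiset.replicate n {g, -g})
    (by
      intro A hA
      rcases (by simpa using hA : A = Multiset.replicate n g ∨ A = Multiset.replicate n (-g))
        with rfl | rfl
      · have := pow_isAtomSeq (G₀ := G₀) (g := g) (by simp [G₀]); rwa [hg] at this
      · have := pow_isAtomSeq (G₀ := G₀) (g := -g) (by simp [G₀]); rwa [hng] at this)
    (fun A hA => by rw [Multiset.eq_of_mem_replicate hA]; exact hat)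
    (by
      rw [Multiset.sum_replicate, ← Multiset.nsmul_singleton, ← Multiset.nsmul_singleton,
        Multiset.insert_eq_cons, Multiset.insert_eq_cons, Multiset.sum_cons,
        Multiset.sum_singleton, ← Multiset.singleton_add g, nsmul_add])
    (by simp; omega)
  exact ⟨_, ⟨G₀, ⟨d, hd⟩, rfl⟩, hlow _ (Nat.sInf_mem ⟨d, hd⟩)⟩

lemma exists_indep_zmod {p k : ℕ} [Fact p.Prime] {V : Type*} [AddCommGroup V]
    [Module (ZMod p) V] [Finite V] (h : Module.finrank (ZMod p) V = k) :
    ∃ b : Fin k → V, ∀ c : Fin k → ℕ, ∑ i, c i • b i = 0 → ∀ i, p ∣ c i := by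
  let b := Module.finBasisOfFinrankEq (ZMod p) V h
  refine ⟨b, fun c hc i => ?_⟩
  have h0 : ∑ i, (c i : ZMod p) • b i = 0 := by
    simpa only [Nat.cast_smul_eq_nsmul] using hc
  have := Fintype.linearIndependent_iff.1 b.linearIndependent _ h0 i
  exact (ZMod.natCast_eq_zero_iff _ _).1 this

lemma exists_indep [Finite G] {p : ℕ} (hp : p.Prime) :
    ∃ e : Fin (pRank G p) → G, (∀ i, p • e i = 0) ∧
      ∀ c : Fin (pRank G p) → ℕ, ∑ i, c i • e i = 0 → ∀ i, p ∣ c i := by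
  have := Fact.mk hp
  let H : AddSubgroup G := (nsmulAddMonoidHom p : G →+ G).ker
  have hH : ∀ x : H, p • x = 0 := fun x => Subtype.ext (show p • (x : G) = 0 from x.2)
  let : Module (ZMod p) H := AddCommGroup.zmodModule hH
  have : Fintype H := Fintype.ofFinite H
  have hcard : Nat.card {x : G // p • x = 0} = p ^ Module.finrank (ZMod p) H := by
    have h1 := Module.card_eq_pow_finrank (K := ZMod p) (V := H)
    rw [ZMod.card, ← Nat.card_eq_fintype_card] at h1
    exact h1
  have hr : pRank G p = Module.finrank (ZMod p) H := by
    rw [pRank, hcard, Nat.log_pow hp.one_lt]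
  obtain ⟨b, hb⟩ := exists_indep_zmod (p := p) (V := H) hr.symm
  refine ⟨fun i => (b i : G), fun i => ?_, fun c hc i => ?_⟩
  · have := congrArg Subtype.val (hH (b i)); simpa using this
  · refine hb c (Subtype.ext ?_) i
    rw [AddSubgroup.val_finsetSum]
    simpa using hc

lemma exists_star_rank [Finite G] {p r : ℕ} (hp : p.Prime) (hr : 2 ≤ r) (e : Fin r → G)
    (he : ∀ i, p • e i = 0) (hind : ∀ c : Fin r → ℕ, ∑ i, c i • e i = 0 → ∀ i, p ∣ c i) :
    ∃ d ∈ DeltaStar G, r - 1 ≤ d := by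
  classical
  have hp2 := hp.two_le
  let e₀ : G := ∑ i, e i
  have he₀ : p • e₀ = 0 := by simp only [e₀, Finset.smul_sum, he, Finset.sum_const_zero]
  have hp1 : ¬ p ∣ 1 := fun h => hp.one_lt.ne' (Nat.dvd_one.1 h)
  have hsmul : ∀ j, e j + (p - 1) • e j = 0 := fun j => by
    rw [← succ_nsmul', Nat.sub_add_cancel (by omega), he]
  have hinj : Function.Injective e := by
    intro i j hij
    by_contra hne
    have := hind (fun k => (if k = i then 1 else 0) + (if k = j then p - 1 else 0)) (by
      simp [add_smul, Finset.sum_add_distrib, ite_smul]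
      rw [hij]; exact hsmul j) i
    simp [hne] at this
    omega
  have hnot : ∀ j, e j ≠ e₀ := by
    intro j hj
    obtain ⟨i, hij⟩ : ∃ i : Fin r, i ≠ j := by
      have : Nontrivial (Fin r) := Fin.nontrivial_iff_two_le.2 hr
      exact exists_ne j
    have := hind (fun k => 1 + (if k = j then p - 1 else 0)) (by
      simp [add_smul, Finset.sum_add_distrib, ite_smul]
      change e₀ + _ = 0
      rw [← hj]; exact hsmul j) i
    simp [hij] at this
    omega
  have hord : ∀ i, addOrderOf (e i) = p := by
    intro i
    have := Fact.mk hp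
    refine addOrderOf_eq_prime (he i) fun h0 => ?_
    have := hind (fun k => if k = i then 1 else 0) (by simp [ite_smul, h0]) i
    simp at this
    omega
  have hord₀ : addOrderOf e₀ = p := by
    have := Fact.mk hp
    refine addOrderOf_eq_prime he₀ fun h0 => ?_
    exact hp1 (hind (fun _ => 1) (by simpa using h0) ⟨0, by omega⟩)
  let G₀ : Set G := insert e₀ (Set.range e)
  have hdecomp : ∀ A : Multiset G, (∀ x ∈ A, x ∈ G₀) →
      A = Multiset.replicate (A.count e₀) e₀ + ∑ i, Multiset.replicate (A.count (e i)) (e i) := by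
    intro A hA
    ext x
    rw [Multiset.count_add, Multiset.count_sum', Multiset.count_replicate]
    simp only [Multiset.count_replicate]
    by_cases hx : x ∈ A
    · rcases hA x hx with rfl | ⟨j, rfl⟩
      · simp [hnot]
      · simp [(hnot j).symm, hinj.eq_iff]
    · have h0 : A.count x = 0 := Multiset.count_eq_zero.2 hx
      rw [h0]
      symm
      rw [Nat.add_eq_zero_iff]
      constructor
      · split_ifs with h
        · rw [h]; exact h0
        · rfl
      · refine Finset.sum_eq_zero fun i _ => ?_
        split_ifs with h
        · rw [h]; exact h0
        · rfl
  have hsumA : ∀ A : Multiset G, (∀ x ∈ A, x ∈ G₀) → A.sum = 0 →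
      ∀ i, p ∣ A.count e₀ + A.count (e i) := by
    intro A hA hs
    refine hind (fun i => A.count e₀ + A.count (e i)) ?_
    rw [hdecomp A hA, Multiset.sum_add, Multiset.sum_sum] at hs
    simp only [Multiset.sum_replicate] at hs
    simp only [add_smul, Finset.sum_add_distrib, ← Finset.smul_sum]
    exact hs
  have hcls : ∀ A, IsAtomSeq G₀ A → A = Multiset.replicate p e₀ ∨
      (∃ i, A = Multiset.replicate p (e i)) ∨
      (A.count e₀ < p ∧ 0 < A.count e₀ ∧ ∀ i, A.count (e i) = p - A.count e₀) := by
    intro A hA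
    by_cases h1 : A = Multiset.replicate p e₀
    · exact Or.inl h1
    by_cases h2 : ∃ i, A = Multiset.replicate p (e i)
    · exact Or.inr (Or.inl h2)
    push Not at h2
    refine Or.inr (Or.inr ?_)
    have c1 := hA.count_lt e₀ (by rwa [hord₀])
    have c2 := fun i => hA.count_lt (e i) (by rw [hord]; exact h2 i)
    rw [hord₀] at c1
    simp only [hord] at c2
    have hdv := hsumA A hA.1.1 hA.1.2
    have hpos : 0 < A.count e₀ := by
      by_contra h0
      have h00 : A.count e₀ = 0 := by omega
      apply hA.2.1
      rw [hdecomp A hA.1.1, h00]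
      have : ∀ i, A.count (e i) = 0 := fun i => by
        have := hdv i
        rw [h00, zero_add] at this
        exact Nat.eq_zero_of_dvd_of_lt this (c2 i)
      simp [this]
    refine ⟨c1, hpos, fun i => ?_⟩
    obtain ⟨q, hq⟩ := hdv i
    have := c2 i
    have hq1 : q = 1 := by
      have h3 : q < 2 := by
        by_contra h; nlinarith
      have h4 : q ≠ 0 := by rintro rfl; omega
      omega
    rw [hq1] at hq
    omega
  let i₀ : Fin r := ⟨0, by omega⟩
  let ψ : Multiset G →+ ℤ :=
    { toFun := fun A => (A.count e₀ : ℤ) + ∑ i, (A.count (e i) : ℤ)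
        - (r - 1) * A.count (e i₀)
      map_zero' := by simp
      map_add' := by
        intro A B; simp only [Multiset.count_add]; push_cast
        rw [Finset.sum_add_distrib]; ring }
  have hlow : ∀ d ∈ DeltaSet G₀, r - 1 ≤ d := by
    refine delta_lower ψ (N := p) hp.pos ?_
    intro A hA
    have hcast : ((p * (r - 1) : ℕ) : ℤ) = (p : ℤ) * (r - 1) := by
      push_cast [Nat.cast_sub (show 1 ≤ r by omega)]; ring
    rw [hcast]
    have hψ : ψ A = (A.count e₀ : ℤ) + ∑ i, (A.count (e i) : ℤ) - (r - 1) * A.count (e i₀) := rfl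
    rw [hψ]
    rcases hcls A hA with rfl | ⟨i, rfl⟩ | ⟨h1, h2, h3⟩
    · simp [Multiset.count_replicate, (hnot _).symm]
    · simp only [Multiset.count_replicate, hnot, hinj.eq_iff]
      by_cases hi : i = i₀
      · simp [hi]
        exact ⟨1, by ring⟩
      · simp [hi]
    · simp only [h3]
      rw [Finset.sum_const, Finset.card_univ, Fintype.card_fin]
      push_cast [Nat.cast_sub h1.le]
      rw [show ((Multiset.count e₀ A : ℕ) : ℤ) + r • ((p : ℤ) - Multiset.count e₀ A)
        - (r - 1) * (p - Multiset.count e₀ A) - p = 0 by rw [nsmul_eq_mul]; ring]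
      exact dvd_zero _
  -- nonemptiness
  let U : ℕ → Multiset G := fun j => Multiset.replicate j e₀ + ∑ i, Multiset.replicate (p - j) (e i)
  have hUc₀ : ∀ j, (U j).count e₀ = j := by
    intro j
    simp [U, Multiset.count_sum', Multiset.count_replicate, hnot]
  have hUc : ∀ j i, (U j).count (e i) = p - j := by
    intro j i
    simp [U, Multiset.count_sum', Multiset.count_replicate, (hnot _).symm, hinj.eq_iff]
  have hUmem : ∀ j, ∀ x ∈ U j, x ∈ G₀ := by
    intro j x hx
    rcases Multiset.mem_add.1 hx with hx | hx
    · rw [Multiset.eq_of_mem_replicate hx]; exact Set.mem_insert _ _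
    · obtain ⟨i, _, hx⟩ := Multiset.mem_sum.1 hx
      rw [Multiset.eq_of_mem_replicate hx]; exact Set.mem_insert_of_mem _ ⟨i, rfl⟩
  have hUat : ∀ j, 0 < j → j < p → IsAtomSeq G₀ (U j) := by
    intro j hj hjp
    refine ⟨⟨hUmem j, ?_⟩, ?_, ?_⟩
    · simp only [U, Multiset.sum_add, Multiset.sum_sum, Multiset.sum_replicate, ← Finset.smul_sum]
      change j • e₀ + (p - j) • e₀ = 0
      rw [← add_smul, Nat.add_sub_cancel' hjp.le, he₀]
    · intro h0
      have := hUc₀ j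
      rw [h0, Multiset.count_zero] at this
      omega
    · have main : ∀ A B : Multiset G, IsZeroSumSeq G₀ A → IsZeroSumSeq G₀ B → U j = A + B →
          0 < A.count e₀ → B = 0 := by
        intro A B hA hB hAB hpos
        have b0 := hUc₀ j
        rw [hAB, Multiset.count_add] at b0
        have hAi := hsumA A hA.1 hA.2
        have bi : ∀ i, A.count (e i) + B.count (e i) = p - j := fun i => by
          rw [← hUc j i, hAB, Multiset.count_add]
        have k1 : ∀ i, p ≤ A.count e₀ + A.count (e i) := fun i =>
          Nat.le_of_dvd (by omega) (hAi i)
        have k2 : B.count e₀ = 0 := by have := k1 i₀; have := bi i₀; omega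
        have k3 : ∀ i, B.count (e i) = 0 := fun i => by
          have := k1 i; have := bi i; omega
        rw [hdecomp B hB.1, k2]
        simp [k3]
      intro A B hA hB hA0 hB0 hAB
      have b0 := hUc₀ j
      rw [hAB, Multiset.count_add] at b0
      by_cases hpos : 0 < A.count e₀
      · exact hB0 (main A B hA hB hAB hpos)
      · exact hA0 (main B A hB hA (by rw [hAB, add_comm]) (by omega))
  obtain ⟨d, hd, -⟩ := exists_delta_le (G₀ := G₀)
    (l₁ := {U 1, U (p - 1)})
    (l₂ := Multiset.replicate p e₀ ::ₘ
      (Finset.univ : Finset (Fin r)).val.map fun i => Multiset.replicate p (e i))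
    (by
      intro A hA
      rcases (by simpa using hA : A = U 1 ∨ A = U (p - 1)) with rfl | rfl
      · exact hUat 1 (by omega) (by omega)
      · exact hUat (p - 1) (by omega) (by omega))
    (by
      intro A hA
      rcases Multiset.mem_cons.1 hA with rfl | hA
      · have := pow_isAtomSeq (G₀ := G₀) (g := e₀) (Set.mem_insert _ _); rwa [hord₀] at this
      · obtain ⟨i, _, rfl⟩ := Multiset.mem_map.1 hA
        have := pow_isAtomSeq (G₀ := G₀) (g := e i) (Set.mem_insert_of_mem _ ⟨i, rfl⟩)
        rwa [hord] at this)
    (by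
      rw [Multiset.insert_eq_cons, Multiset.sum_cons, Multiset.sum_singleton, Multiset.sum_cons]
      change _ = _ + ∑ i, Multiset.replicate p (e i)
      have t1 : Multiset.replicate p e₀ = Multiset.replicate 1 e₀ + Multiset.replicate (p - 1) e₀ := by
        rw [← Multiset.replicate_add]; congr 1; omega
      have t2 : ∑ i, Multiset.replicate p (e i) = ∑ i, Multiset.replicate (p - 1) (e i)
          + ∑ i, Multiset.replicate (p - (p - 1)) (e i) := by
        rw [← Finset.sum_add_distrib]
        refine Finset.sum_congr rfl fun i _ => ?_
        rw [← Multiset.replicate_add]; congr 1; omega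
      rw [t1, t2]
      simp only [U]
      abel)
    (by simp; omega)
  exact ⟨_, ⟨G₀, ⟨d, hd⟩, rfl⟩, hlow _ (Nat.sInf_mem ⟨d, hd⟩)⟩

end Aux

/-- For a finite abelian group `G` with `|G| > 2`,
`max Δ*(G) = max { exp(G) − 2, r(G) − 1 }`. -/
theorem stmt_0 (G : Type*) [AddCommGroup G] [Fintype G] (hG : 2 < Fintype.card G) :
    sSup (DeltaStar G) = max (AddMonoid.exponent G - 2) (rankG G - 1) := by

  have hub : ∀ d ∈ DeltaStar G, d ≤ max (AddMonoid.exponent G - 2) (rankG G - 1) := by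
    rintro d ⟨G₀, hne, rfl⟩
    exact upper_bound hne
  have hbdd : BddAbove (DeltaStar G) := ⟨_, hub⟩
  apply le_antisymm
  · exact csSup_le' hub
  · apply max_le
    · by_cases hn : 3 ≤ AddMonoid.exponent G
      · obtain ⟨d, hd, hle⟩ := exists_star_exp hn
        exact hle.trans (le_csSup hbdd hd)
      · omega
    · by_cases hr : 2 ≤ rankG G
      · obtain ⟨p, hp, hpr⟩ : rankG G ∈ {r : ℕ | ∃ p : ℕ, p.Prime ∧ r = pRank G p} :=
          Nat.sSup_mem ⟨_, 2, Nat.prime_two, rfl⟩ bddAbove_pRank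
        rw [hpr] at hr ⊢
        obtain ⟨e, he, hind⟩ := exists_indep (G := G) hp
        obtain ⟨d, hd, hle⟩ := exists_star_rank hp hr e he hind
        exact hle.trans (le_csSup hbdd hd)
      · omega
end

section
/- Let G be a finite abelian group and G₀ ⊆ G a subset with |G₀| ≥ r(G) + 2 satisfying: (a) for every h ∈ G₀, the set G₀ \ {h} is half-factorial and h ∉ ⟨G₀ \ {h, h'}⟩ for every h' ∈ G₀ \ {h}; and (b) there exists g ∈ G₀ with g ∈ ⟨G₀ \ {g}⟩ such that ord(g) is not a prime power. Then |G₀| ≤ exp(G) − 2. -/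
open Multiset

lemma aux_len {G : Type*} [AddCommGroup G] {H : Set G} (hH : IsHalfFactorialSet H)
    {B : Multiset G} (hB : IsZeroSumSeq H B) (hB0 : B ≠ 0) {x y : ℕ}
    (hx : x ∈ LengthSet H B) (hy : y ∈ LengthSet H B) : ¬ x < y := by
  intro hxy
  classical
  have hex : ∃ z, z ∈ LengthSet H B ∧ x < z := ⟨y, hy, hxy⟩
  have h1 := Nat.find_spec hex
  have : (Nat.find hex - x) ∈ DeltaSet H := by
    refine ⟨B, hB, hB0, x, hx, Nat.find hex, h1.1, h1.2, rfl, ?_⟩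
    rintro z hz ⟨h2, h3⟩
    exact Nat.find_min hex h3 ⟨hz, h2⟩
  rw [hH] at this
  exact this

lemma aux_atom_rep {G : Type*} [AddCommGroup G] [Fintype G] {H : Set G} {e : G} (he : e ∈ H) :
    IsAtomSeq H (Multiset.replicate (addOrderOf e) e) := by
  have hpos := addOrderOf_pos e
  refine ⟨⟨?_, ?_⟩, ?_, ?_⟩
  · intro x hx
    rw [Multiset.eq_of_mem_replicate hx]; exact he
  · simp [addOrderOf_nsmul_eq_zero]
  · intro h
    have := congrArg Multiset.card h
    rw [Multiset.card_replicate, Multiset.card_zero] at this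
    omega
  · intro A B hA hB hA0 hB0 h
    have hA' : A ≤ Multiset.replicate (addOrderOf e) e := by rw [h]; exact Multiset.le_add_right _ _
    rw [Multiset.le_replicate_iff] at hA'
    obtain ⟨k, hk, rfl⟩ := hA'
    have hs := hA.2
    rw [Multiset.sum_replicate] at hs
    have hc := congrArg Multiset.card h
    simp only [Multiset.card_add, Multiset.card_replicate] at hc
    have hBp : 0 < Multiset.card B := Multiset.card_pos.2 hB0
    have hk0 : 0 < k := by
      rcases Nat.eq_zero_or_pos k with h0 | h0
      · subst h0; simp at hA0
      · exact h0
    have := addOrderOf_le_of_nsmul_eq_zero hk0 hs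
    omega

lemma aux_card {G : Type*} [AddCommGroup G] [Fintype G] {H : Set G} (hH : IsHalfFactorialSet H)
    {A : Multiset G} (hA : IsAtomSeq H A) : Multiset.card A ≤ AddMonoid.exponent G := by
  set n := AddMonoid.exponent G with hn
  have hnpos : 0 < n := AddMonoid.exponent_pos.2 (AddMonoid.ExponentExists.of_finite)
  have hdiv : ∀ x : G, addOrderOf x ∣ n := fun x => AddMonoid.addOrder_dvd_exponent x
  -- factorization of `n • A` into the atoms `e ^ ord e`
  have key : ∀ S : Multiset G, (∀ x ∈ S, x ∈ H) →
      ∃ l : Multiset (Multiset G), Multiset.card S ≤ Multiset.card l ∧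
        (∀ U ∈ l, IsAtomSeq H U) ∧ l.sum = n • S := by
    intro S
    induction S using Multiset.induction_on with
    | empty => intro _; exact ⟨0, by simp, by simp, by simp⟩
    | cons a S ih =>
      intro hS
      obtain ⟨l, h1, h2, h3⟩ := ih (fun x hx => hS x (Multiset.mem_cons_of_mem hx))
      have haH := hS a (Multiset.mem_cons_self a S)
      obtain ⟨m, hm⟩ := hdiv a
      have hmpos : 0 < m := by
        rcases Nat.eq_zero_or_pos m with h | h
        · subst h; omega
        · exact h
      refine ⟨Multiset.replicate m (Multiset.replicate (addOrderOf a) a) + l, ?_, ?_, ?_⟩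
      · simp; omega
      · intro U hU
        rcases Multiset.mem_add.1 hU with h | h
        · rw [Multiset.eq_of_mem_replicate h]; exact aux_atom_rep haH
        · exact h2 U h
      · rw [Multiset.sum_add, h3, Multiset.sum_replicate, ← Multiset.singleton_add, nsmul_add,
          Multiset.nsmul_singleton, hm, Multiset.nsmul_replicate, mul_comm]
  obtain ⟨l, h1, h2, h3⟩ := key A hA.1.1
  have hz : IsZeroSumSeq H (n • A) := by
    constructor
    · intro x hx
      exact hA.1.1 x (Multiset.mem_of_mem_nsmul hx)
    · rw [Multiset.sum_nsmul, hA.1.2, smul_zero]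
  have hne : n • A ≠ 0 := by
    intro h
    have := congrArg Multiset.card h
    simp only [Multiset.card_nsmul, Multiset.card_zero] at this
    have h4 : 0 < Multiset.card A := Multiset.card_pos.2 hA.2.1
    have := Nat.mul_pos hnpos h4
    omega
  have hx : n ∈ LengthSet H (n • A) := by
    refine ⟨Multiset.replicate n A, by simp, ?_, by simp⟩
    intro U hU
    rw [Multiset.eq_of_mem_replicate hU]; exact hA
  have := aux_len hH hz hne hx ⟨l, rfl, h2, h3⟩
  omega

lemma aux_prank {G : Type*} [AddCommGroup G] [Fintype G] {p : ℕ} (hp : p.Prime) :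
    Nat.log p (Nat.card {x : G // p • x = 0}) ≤ rankG G := by
  refine le_csSup ⟨Nat.card G, ?_⟩ ⟨p, hp, rfl⟩
  rintro r ⟨q, hq, rfl⟩
  exact (Nat.log_le_self _ _).trans (Nat.card_le_card_of_injective _ Subtype.val_injective)

lemma aux_vs {V : Type*} [AddCommGroup V] [Finite V] {p : ℕ} (hp : p.Prime)
    [Fact p.Prime] [Module (ZMod p) V] (S : Set V) (hS : AddSubgroup.closure S = ⊤) :
    ∃ b ⊆ S, b.ncard ≤ Nat.log p (Nat.card V) ∧ AddSubgroup.closure b = ⊤ := by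
  obtain ⟨b, hb, hspan, hli⟩ := exists_linearIndependent (ZMod p) S
  refine ⟨b, hb, ?_, ?_⟩
  · have h5 : Nat.card V = p ^ Module.finrank (ZMod p) V := by
      rw [Module.natCard_eq_pow_finrank (K := ZMod p) (V := V), Nat.card_zmod]
    rw [h5, Nat.log_pow hp.one_lt]
    have : Fintype b := (Set.toFinite b).fintype
    have h6 := hli.fintype_card_le_finrank
    rwa [← Nat.card_coe_set_eq, Nat.card_eq_fintype_card]
  · rw [eq_top_iff, ← hS, AddSubgroup.closure_le]
    intro e he
    have h6 : e ∈ Submodule.span (ZMod p) b := by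
      rw [hspan]; exact Submodule.subset_span he
    let W : Submodule (ZMod p) V := AddSubgroup.toZModSubmodule p (AddSubgroup.closure b)
    have h8 : Submodule.span (ZMod p) b ≤ W := by
      rw [Submodule.span_le]
      intro w hw
      exact AddSubgroup.subset_closure hw
    exact h8 h6

lemma aux_gen {K : Type*} [AddCommGroup K] [Finite K] {p : ℕ} (hp : p.Prime)
    (E : Set K) (hE : AddSubgroup.closure E = ⊤) :
    ∃ F ⊆ E, F.ncard ≤ Nat.log p (Nat.card {x : K // p • x = 0}) ∧
      ∀ (x : K) (v : ℕ), p ^ v • x = 0 → x ∈ AddSubgroup.closure F := by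
  set φ : K →+ K := nsmulAddMonoidHom p with hφ
  let V := K ⧸ φ.range
  let π : K →+ V := QuotientAddGroup.mk' φ.range
  have hV : ∀ x : V, p • x = 0 := by
    intro x
    induction x using QuotientAddGroup.induction_on with
    | H z =>
      rw [← QuotientAddGroup.mk_nsmul, QuotientAddGroup.eq_zero_iff]
      exact ⟨z, rfl⟩
  have hπ : AddSubgroup.closure (π '' E) = ⊤ := by
    rw [← AddMonoidHom.map_closure, hE, ← AddMonoidHom.range_eq_map, AddMonoidHom.range_eq_top]
    exact QuotientAddGroup.mk'_surjective _
  obtain ⟨b, hb, hbcard, hbtop⟩ := @aux_vs V _ _ p hp ⟨hp⟩ (AddCommGroup.zmodModule hV) (π '' E) hπ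
  have hcardV : Nat.card V = Nat.card {x : K // p • x = 0} := by
    have h1 : Nat.card V * Nat.card φ.range = Nat.card K :=
      (AddSubgroup.card_eq_card_quotient_mul_card_addSubgroup _).symm
    have h2 : Nat.card φ.ker * φ.ker.index = Nat.card K := AddSubgroup.card_mul_index _
    rw [AddSubgroup.index_ker] at h2
    have h3 : Nat.card φ.ker = Nat.card {x : K // p • x = 0} := rfl
    rw [← h3]
    have h4 : 0 < Nat.card φ.range := Nat.card_pos
    exact Nat.eq_of_mul_eq_mul_right h4 (h1.trans h2.symm)
  rw [hcardV] at hbcard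
  obtain ⟨F, hFE, hF⟩ := Set.SurjOn.exists_bijOn_subset (f := π) (s := E) (t := b) hb
  refine ⟨F, hFE, ?_, ?_⟩
  · rw [← hF.image_eq, hF.injOn.ncard_image] at hbcard
    exact hbcard
  · -- every element of `K` is in `⟨F⟩ + pK`
    have hgen : ∀ y : K, ∃ z, y - p • z ∈ AddSubgroup.closure F := by
      have hle : AddSubgroup.closure E ≤ (AddSubgroup.closure F ⊔ φ.range) := by
        rw [AddSubgroup.closure_le]
        intro e he
        have h7 : π e ∈ (AddSubgroup.closure F).map π := by
          rw [AddMonoidHom.map_closure, hF.image_eq, hbtop]; trivial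
        obtain ⟨w, hw, hwe⟩ := h7
        have h9 : -w + e ∈ φ.range := QuotientAddGroup.eq.1 hwe
        have : e = w + (-w + e) := by abel
        rw [SetLike.mem_coe, this]
        exact AddSubgroup.add_mem_sup hw h9
      intro y
      have hy : y ∈ AddSubgroup.closure F ⊔ φ.range := hle (by rw [hE]; trivial)
      obtain ⟨w, hw, r, ⟨z, rfl⟩, rfl⟩ := AddSubgroup.mem_sup.1 hy
      exact ⟨z, by simpa [hφ] using hw⟩
    let M := K ⧸ AddSubgroup.closure F
    let ψ : M →+ M := nsmulAddMonoidHom p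
    have hsurj : Function.Surjective ψ := by
      intro m
      induction m using QuotientAddGroup.induction_on with
      | H y =>
        obtain ⟨z, hz⟩ := hgen y
        refine ⟨(z : M), ?_⟩
        change p • ((z : K) : M) = (y : M)
        rw [← QuotientAddGroup.mk_nsmul, QuotientAddGroup.eq]
        have : -(p • z) + y = y - p • z := by abel
        rw [this]; exact hz
    have hinj : Function.Injective ψ := Finite.injective_iff_surjective.2 hsurj
    have hM : ∀ (v : ℕ) (m : M), p ^ v • m = 0 → m = 0 := by
      intro v
      induction v with
      | zero => intro m hm; simpa using hm
      | succ v ih =>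
        intro m hm
        apply ih
        apply hinj
        change p • (p ^ v • m) = p • (0 : M)
        rw [smul_zero, smul_smul, ← pow_succ', hm]
    intro x v hx
    have := hM v (x : M) (by rw [← QuotientAddGroup.mk_nsmul, hx]; rfl)
    exact (QuotientAddGroup.eq_zero_iff x).1 this

lemma aux_rank {G : Type*} [AddCommGroup G] [Fintype G] {p : ℕ} (hp : p.Prime)
    (E : Set G) (x : G) (hx : x ∈ AddSubgroup.closure E) (v : ℕ) (hv : p ^ v • x = 0) :
    ∃ F ⊆ E, F.ncard ≤ rankG G ∧ x ∈ AddSubgroup.closure F := by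
  let K := AddSubgroup.closure E
  obtain ⟨F, hFE, hFc, hF⟩ := aux_gen (K := K) hp (((↑) : K → G) ⁻¹' E)
    (AddSubgroup.closure_closure_coe_preimage)
  refine ⟨((↑) : K → G) '' F, ?_, ?_, ?_⟩
  · rintro _ ⟨y, hy, rfl⟩
    exact hFE hy
  · rw [Set.ncard_image_of_injective _ Subtype.val_injective]
    refine hFc.trans (le_trans (Nat.log_mono_right ?_) (aux_prank (G := G) hp))
    refine Nat.card_le_card_of_injective
      (fun y : {x : K // p • x = 0} => (⟨(y.1 : G), by
        have := congrArg (Subtype.val) y.2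
        simpa using this⟩ : {x : G // p • x = 0})) ?_
    intro a b hab
    apply Subtype.ext; apply Subtype.ext
    exact congrArg (fun y : {x : G // p • x = 0} => (y : G)) hab
  · have := hF ⟨x, hx⟩ v (Subtype.ext (by simpa using hv))
    have h2 : ((⟨x, hx⟩ : K) : G) ∈ (AddSubgroup.closure F).map K.subtype := ⟨_, this, rfl⟩
    rw [AddMonoidHom.map_closure] at h2
    exact h2

lemma aux_sum_mem {G : Type*} [AddCommGroup G] (F : Set G) (T : Multiset G)
    (h : ∀ x ∈ T, x ∈ F) : T.sum ∈ AddSubgroup.closure F :=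
  AddSubgroup.multiset_sum_mem _ _ (fun x hx => AddSubgroup.subset_closure (h x hx))

lemma aux_bound {G : Type*} [AddCommGroup G] [Fintype G] (G₀ : Set G)
    (ha : ∀ h ∈ G₀, IsHalfFactorialSet (G₀ \ {h}) ∧
      ∀ h' ∈ G₀ \ {h}, h ∉ AddSubgroup.closure (G₀ \ {h, h'}))
    {g : G} (hg : g ∈ G₀) {F : Set G} (hF : F ⊆ G₀ \ {g}) (hFne : F ≠ G₀ \ {g})
    {b : ℕ} (hb : 0 < b) (hbF : b • g ∈ AddSubgroup.closure F)
    (hbmin : ∀ c, 0 < c → c • g ∈ AddSubgroup.closure F → b ≤ c)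
    (hFmin : ∀ F' ⊆ F, b • g ∈ AddSubgroup.closure F' → F' = F) :
    2 * F.ncard + b ≤ AddMonoid.exponent G := by
  classical
  obtain ⟨h', hh', hh'F⟩ := Set.exists_of_ssubset (hF.ssubset_of_ne hFne)
  have hgF : g ∉ F := fun h => (hF h).2 rfl
  have hexT : ∃ k, ∃ T : Multiset G, Multiset.card T = k ∧ (∀ x ∈ T, x ∈ F) ∧
      T.sum = -(b • g) := by
    have h1 : -(b • g) ∈ AddSubgroup.closure F := neg_mem hbF
    rw [← AddSubgroup.mem_toAddSubmonoid, AddSubgroup.closure_toAddSubmonoid_of_finite] at h1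
    obtain ⟨T, hT, hs⟩ := AddSubmonoid.exists_multiset_of_mem_closure h1
    exact ⟨_, T, rfl, hT, hs⟩
  obtain ⟨T, hTc, hTF, hTs⟩ := Nat.find_spec hexT
  have hTmin : ∀ T' : Multiset G, (∀ x ∈ T', x ∈ F) → T'.sum = -(b • g) →
      Multiset.card T ≤ Multiset.card T' := by
    intro T' h1 h2
    rw [hTc]
    exact Nat.find_min' hexT ⟨T', rfl, h1, h2⟩
  have hFH : ∀ x ∈ F, x ∈ G₀ \ {h'} := fun x hx =>
    ⟨(hF hx).1, fun h => hh'F (by rw [← Set.mem_singleton_iff.1 h]; exact hx)⟩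
  have hgH : g ∈ G₀ \ {h'} := ⟨hg, fun h => hh'.2 (by simpa using (Set.mem_singleton_iff.1 h).symm)⟩
  have hgT : g ∉ T := fun h => hgF (hTF g h)
  set M := Multiset.replicate b g + T with hM
  have hMg : Multiset.count g M = b := by
    rw [hM, Multiset.count_add, Multiset.count_replicate_self, Multiset.count_eq_zero_of_notMem hgT]
    rfl
  -- no proper nonempty zero-sum piece avoids `g`
  have hno0 : ∀ A B : Multiset G, A.sum = 0 → A ≠ 0 → M = A + B → Multiset.count g A ≠ 0 := by
    intro A B hA hA0 hAB h0
    have hAT : A ≤ T := by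
      rw [Multiset.le_iff_count]
      intro x
      by_cases hx : x = g
      · rw [hx, h0]; exact Nat.zero_le _
      · have h1 : Multiset.count x A ≤ Multiset.count x M := by
          rw [hAB, Multiset.count_add]; exact Nat.le_add_right _ _
        have h2 : Multiset.count x M = Multiset.count x T := by
          rw [hM, Multiset.count_add, Multiset.count_replicate, if_neg (fun h => hx h.symm),
            Nat.zero_add]
        rwa [h2] at h1
    obtain ⟨T', rfl⟩ := Multiset.le_iff_exists_add.1 hAT
    have h3 := hTmin T' (fun x hx => hTF x (Multiset.mem_add.2 (Or.inr hx)))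
      (by rw [Multiset.sum_add, hA, zero_add] at hTs; exact hTs)
    rw [Multiset.card_add] at h3
    have := Multiset.card_pos.2 hA0
    omega
  have hnolt : ∀ A B : Multiset G, A.sum = 0 → M = A + B → Multiset.count g A ≠ 0 →
      b ≤ Multiset.count g A := by
    intro A B hA hAB h0
    apply hbmin _ (Nat.pos_of_ne_zero h0)
    have h1 : A.filter (fun x => x = g) + A.filter (fun x => ¬ x = g) = A :=
      Multiset.filter_add_not _ _
    have h2 := congrArg Multiset.sum h1
    have h2a : A.filter (fun x => x = g) = Multiset.replicate (Multiset.count g A) g := by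
      convert Multiset.filter_eq' A g
    rw [Multiset.sum_add, h2a, Multiset.sum_replicate, hA] at h2
    have h3 : (A.filter (fun x => ¬ x = g)).sum ∈ AddSubgroup.closure F := by
      apply aux_sum_mem
      intro x hx
      rw [Multiset.mem_filter] at hx
      have : x ∈ M := by rw [hAB]; exact Multiset.mem_add.2 (Or.inl hx.1)
      rcases Multiset.mem_add.1 this with h | h
      · exact absurd (Multiset.eq_of_mem_replicate h) hx.2
      · exact hTF x h
    rw [eq_neg_of_add_eq_zero_left h2]
    exact neg_mem h3
  have hatom : IsAtomSeq (G₀ \ {h'}) M := by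
    refine ⟨⟨?_, ?_⟩, ?_, ?_⟩
    · intro x hx
      rcases Multiset.mem_add.1 hx with h | h
      · rw [Multiset.eq_of_mem_replicate h]; exact hgH
      · exact hFH x (hTF x h)
    · rw [hM, Multiset.sum_add, hTs, Multiset.sum_replicate, add_neg_cancel]
    · intro h
      rw [h] at hMg
      simp at hMg
      omega
    · intro A B hA hB hA0 hB0 hAB
      have hBA : M = B + A := by rw [hAB, add_comm]
      have a1 := hnolt A B hA.2 hAB (hno0 A B hA.2 hA0 hAB)
      have a2 := hnolt B A hB.2 hBA (hno0 B A hB.2 hB0 hBA)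
      rw [hAB, Multiset.count_add] at hMg
      omega
  have hcard := aux_card (ha h' hh'.1).1 hatom
  rw [hM, Multiset.card_add, Multiset.card_replicate] at hcard
  have hcount : ∀ f ∈ F, 2 ≤ Multiset.count f T := by
    intro f hf
    have hfne : f ∈ G₀ := (hF hf).1
    by_contra hlt
    have hcase : Multiset.count f T = 0 ∨ Multiset.count f T = 1 := by omega
    rcases hcase with h0 | h1
    · have hfT : f ∉ T := Multiset.count_eq_zero.1 h0
      have h2 : b • g ∈ AddSubgroup.closure (F \ {f}) := by
        have h3 : T.sum ∈ AddSubgroup.closure (F \ {f}) := by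
          apply aux_sum_mem
          intro x hx
          exact ⟨hTF x hx, fun h => hfT (by rw [← Set.mem_singleton_iff.1 h]; exact hx)⟩
        rw [hTs] at h3
        simpa using neg_mem h3
      have h4 := hFmin _ Set.sdiff_subset h2
      rw [← h4] at hf
      exact hf.2 rfl
    · have hfT : f ∈ T := Multiset.count_pos.1 (by omega)
      have hfh' : h' ∈ G₀ \ {f} := ⟨hh'.1, fun h => hh'F (by rw [Set.mem_singleton_iff.1 h]; exact hf)⟩
      apply (ha f hfne).2 h' hfh'
      have h2 := Multiset.sum_erase hfT
      have h3 : (T.erase f).sum ∈ AddSubgroup.closure (G₀ \ {f, h'}) := by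
        apply aux_sum_mem
        intro x hx
        have hxT := Multiset.mem_of_mem_erase hx
        refine ⟨(hF (hTF x hxT)).1, ?_⟩
        rintro (h | h)
        · subst h
          have := Multiset.count_pos.2 hx
          rw [Multiset.count_erase_self] at this
          omega
        · exact (hFH x (hTF x hxT)).2 h
      have h4 : g ∈ AddSubgroup.closure (G₀ \ {f, h'}) := by
        apply AddSubgroup.subset_closure
        refine ⟨hg, ?_⟩
        rintro (h | h)
        · subst h; exact hgF hf
        · exact hgH.2 h
      have h5 : f = -(b • g) - (T.erase f).sum := by
        rw [← hTs, ← h2]; abel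
      have h6 := sub_mem (neg_mem (nsmul_mem h4 b)) h3
      rwa [← h5] at h6
  have hFfin : F.Finite := Set.toFinite F
  have h2F : 2 • hFfin.toFinset.val ≤ T := by
    rw [Multiset.le_iff_count]
    intro x
    rw [Multiset.count_nsmul]
    by_cases hx : x ∈ F
    · have := hcount x hx
      have h6 := Multiset.nodup_iff_count_le_one.1 hFfin.toFinset.nodup x
      omega
    · rw [Multiset.count_eq_zero_of_notMem (by simpa using hx)]
      omega
  have h7 := Multiset.card_le_card h2F
  rw [Multiset.card_nsmul, Finset.card_val, ← Set.ncard_eq_toFinset_card F hFfin] at h7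
  omega

/-- A subset of `F` minimal with `x` in its span. -/
lemma aux_minset {G : Type*} [AddCommGroup G] [Fintype G] (F : Set G) (x : G)
    (hx : x ∈ AddSubgroup.closure F) :
    ∃ F₁ ⊆ F, x ∈ AddSubgroup.closure F₁ ∧
      ∀ F' ⊆ F₁, x ∈ AddSubgroup.closure F' → F' = F₁ := by
  classical
  have hex : ∃ k, ∃ F₁ ⊆ F, x ∈ AddSubgroup.closure F₁ ∧ F₁.ncard = k :=
    ⟨_, F, subset_rfl, hx, rfl⟩
  obtain ⟨F₁, h1, h2, h3⟩ := Nat.find_spec hex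
  refine ⟨F₁, h1, h2, ?_⟩
  intro F' h4 h5
  apply Set.eq_of_subset_of_ncard_le h4 _ (Set.toFinite _)
  rw [h3]
  exact Nat.find_min' hex ⟨F', h4.trans h1, h5, rfl⟩

theorem stmt_8 {G : Type*} [AddCommGroup G] [Fintype G] (G₀ : Set G)
    (hcard : rankG G + 2 ≤ G₀.ncard)
    (ha : ∀ h ∈ G₀, IsHalfFactorialSet (G₀ \ {h}) ∧
      ∀ h' ∈ G₀ \ {h}, h ∉ AddSubgroup.closure (G₀ \ {h, h'}))
    (hb : ∃ g ∈ G₀, g ∈ AddSubgroup.closure (G₀ \ {g}) ∧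
      ¬ IsPrimePow (addOrderOf g)) :
    G₀.ncard + 2 ≤ AddMonoid.exponent G := by
  classical
  obtain ⟨g, hg, hgE, -⟩ := hb
  set E := G₀ \ {g} with hE
  have hEcard : E.ncard + 1 = G₀.ncard := Set.ncard_sdiff_singleton_add_one hg (Set.toFinite _)
  -- `g` is not in the span of a proper subset of `E`
  have hprop : ∀ F ⊆ E, g ∈ AddSubgroup.closure F → F = E := by
    intro F hF hgF
    by_contra hne
    obtain ⟨h', hh', hh'F⟩ := Set.exists_of_ssubset (hF.ssubset_of_ne hne)
    apply (ha g hg).2 h' hh'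
    refine AddSubgroup.closure_mono ?_ hgF
    intro x hx
    refine ⟨(hF hx).1, ?_⟩
    rintro (h | h)
    · exact (hF hx).2 h
    · exact hh'F (by rw [← Set.mem_singleton_iff.1 h]; exact hx)
  have hex : ∃ d, 0 < d ∧ ∃ F ⊆ E, F ≠ E ∧ d • g ∈ AddSubgroup.closure F := by
    refine ⟨addOrderOf g, addOrderOf_pos g, ∅, Set.empty_subset _, ?_, ?_⟩
    · intro h
      rw [← h] at hEcard
      simp at hEcard
      omega
    · rw [addOrderOf_nsmul_eq_zero]; exact zero_mem _
  obtain ⟨hd0, F, hFE, hFne, hdF⟩ := Nat.find_spec hex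
  have hdmin : ∀ c, 0 < c → ∀ F' ⊆ E, F' ≠ E → c • g ∈ AddSubgroup.closure F' →
      Nat.find hex ≤ c := fun c hc F' h1 h2 h3 => Nat.find_min' hex ⟨hc, F', h1, h2, h3⟩
  generalize Nat.find hex = d at *
  obtain ⟨F₁, hF₁F, hdF₁, hF₁min⟩ := aux_minset F _ hdF
  have hF₁E := hF₁F.trans hFE
  have hF₁ne : F₁ ≠ E := fun h => hFne (subset_antisymm hFE (h ▸ hF₁F))
  have hd1 : d ≠ 1 := by
    rintro rfl
    exact hFne (hprop F hFE (by simpa using hdF))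
  have B1 := aux_bound G₀ ha hg hF₁E hF₁ne hd0 hdF₁
    (fun c hc h => hdmin c hc F₁ hF₁E hF₁ne h) hF₁min
  -- second set
  obtain ⟨p, hp, hpd⟩ := Nat.exists_prime_and_dvd hd1
  have hord := addOrderOf_pos g
  obtain ⟨F₂, hF₂E, hF₂c, hF₂⟩ := aux_rank hp E ((ordCompl[p] (addOrderOf g)) • g)
    (nsmul_mem hgE _) ((addOrderOf g).factorization p) (by
      rw [smul_smul, Nat.ordProj_mul_ordCompl_eq_self, addOrderOf_nsmul_eq_zero])
  set q := ordCompl[p] (addOrderOf g) with hq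
  have hpq : ¬ p ∣ q := Nat.not_dvd_ordCompl hp hord.ne'
  have hq0 : 0 < q := Nat.ordCompl_pos p hord.ne'
  have hF₂ne : F₂ ≠ E := by
    intro h
    rw [h] at hF₂c
    omega
  have hex2 : ∃ c, 0 < c ∧ c • g ∈ AddSubgroup.closure F₂ := ⟨q, hq0, hF₂⟩
  obtain ⟨hc0, hcF₂⟩ := Nat.find_spec hex2
  have hcmin : ∀ c, 0 < c → c • g ∈ AddSubgroup.closure F₂ → Nat.find hex2 ≤ c :=
    fun c h1 h2 => Nat.find_min' hex2 ⟨h1, h2⟩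
  generalize Nat.find hex2 = c at *
  have hgcd : ∀ (a b : ℕ) (S : AddSubgroup G), a • g ∈ S → b • g ∈ S → (Nat.gcd a b) • g ∈ S := by
    intro a b S h1 h2
    have h3 : ((Nat.gcd a b : ℕ) : ℤ) • g ∈ S := by
      rw [Nat.gcd_eq_gcd_ab, add_smul, mul_comm, mul_smul, mul_comm (b : ℤ), mul_smul,
        natCast_zsmul, natCast_zsmul]
      exact add_mem (zsmul_mem h1 _) (zsmul_mem h2 _)
    rwa [natCast_zsmul] at h3
  have hcq : c ∣ q := by
    have h1 := hcmin _ (Nat.gcd_pos_of_pos_left q hc0) (hgcd c q _ hcF₂ hF₂)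
    have h2 := Nat.gcd_le_left q hc0
    have h3 : Nat.gcd c q = c := le_antisymm h2 h1
    rw [← h3]; exact Nat.gcd_dvd_right _ _
  have hpc : ¬ p ∣ c := fun h => hpq (h.trans hcq)
  obtain ⟨F₃, hF₃F, hcF₃, hF₃min⟩ := aux_minset F₂ _ hcF₂
  have hF₃E := hF₃F.trans hF₂E
  have hF₃ne : F₃ ≠ E := fun h => hF₂ne (subset_antisymm hF₂E (h ▸ hF₃F))
  have hc1 : c ≠ 1 := by
    rintro rfl
    exact hF₃ne (hprop F₃ hF₃E (by simpa using hcF₃))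
  have B2 := aux_bound G₀ ha hg hF₃E hF₃ne hc0 hcF₃
    (fun c' hc' h => hcmin c' hc' (AddSubgroup.closure_mono hF₃F h)) hF₃min
  have hunion : F₁ ∪ F₃ = E := by
    by_contra hne
    have h1 := hdmin (Nat.gcd d c) (Nat.gcd_pos_of_pos_left c hd0) (F₁ ∪ F₃)
      (Set.union_subset hF₁E hF₃E) hne
      (hgcd d c _ (AddSubgroup.closure_mono Set.subset_union_left hdF₁)
        (AddSubgroup.closure_mono Set.subset_union_right hcF₃))
    have h2 := Nat.gcd_le_left c hd0
    have h3 : Nat.gcd d c = d := le_antisymm h2 h1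
    exact hpc (hpd.trans (h3 ▸ Nat.gcd_dvd_right d c))
  have hle := Set.ncard_union_le F₁ F₃
  rw [hunion] at hle
  have hne2 : ¬ (d = 2 ∧ c = 2) := by
    rintro ⟨rfl, rfl⟩
    exact hpc hpd
  omega
end
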